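/- Let G be an Artin group of large type, let g ∈ G and let i ≠ j. Then among the left divisors of g that lie in G(i,j) there is a unique one of maximal word length, denoted LD_{ij}(g); similarly, among the right divisors of g lying in G(i,j) there is a unique one of maximal word length, denoted RD_{ij}(g). Furthermore, if w is any geodesic word representing g and u ∈ G(i,j) is the element represented by the maximal {x_i,x_j}-prefix of w, then there exist a letter a ∈ {x_i^{±1}, x_j^{±1}} and an integer r ≥ 0 such that LD_{ij}(g) = u a^r in G and ℓ(LD_{ij}(g)) = ℓ(u) + r. -/

import Mathlib

namespace ArtinRD

/-- The alternating product `xyxy...` with `m` factors, starting with `x`. -/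
def altProd {G : Type*} [Monoid G] : ℕ → G → G → G
  | 0, _, _ => 1
  | n + 1, x, y => x * altProd n y x

/-- The Artin relators determined by a Coxeter-type matrix `M` (`⊤` meaning `∞`). -/
def artinRels (n : ℕ) (M : Fin n → Fin n → ℕ∞) : Set (FreeGroup (Fin n)) :=
  {r | ∃ i j : Fin n, i ≠ j ∧ ∃ m : ℕ, M i j = (m : ℕ∞) ∧
    r = altProd m (FreeGroup.of i) (FreeGroup.of j) *
        (altProd m (FreeGroup.of j) (FreeGroup.of i))⁻¹}

/-- The Artin group associated to the matrix `M`. -/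
abbrev ArtinGroup (n : ℕ) (M : Fin n → Fin n → ℕ∞) : Type := PresentedGroup (artinRels n M)

/-- The standard generator `x_i` of the Artin group. -/
def gen (n : ℕ) (M : Fin n → Fin n → ℕ∞) (i : Fin n) : ArtinGroup n M := PresentedGroup.of i

/-- The set `A = {x_1^{±1}, ..., x_n^{±1}}` of standard letters. -/
def genSet (n : ℕ) (M : Fin n → Fin n → ℕ∞) : Set (ArtinGroup n M) :=
  {g | ∃ i : Fin n, g = gen n M i ∨ g = (gen n M i)⁻¹}

/-- Word length of `g` with respect to a set `S`: the least `N` such that `g` is a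
product of `N` elements of `S`. -/
noncomputable def wordLength {G : Type*} [Group G] (S : Set G) (g : G) : ℕ :=
  sInf {N : ℕ | ∃ w : List G, (∀ a ∈ w, a ∈ S) ∧ w.length = N ∧ w.prod = g}

/-- The word length on an Artin group with respect to the standard letters. -/
noncomputable def ℓA (n : ℕ) (M : Fin n → Fin n → ℕ∞) : ArtinGroup n M → ℕ :=
  wordLength (genSet n M)

/-- A letter: a generator index together with a sign (`true` = positive). -/
abbrev Letter (n : ℕ) := Fin n × Bool

/-- The group element corresponding to a letter. -/
def toGen (n : ℕ) (M : Fin n → Fin n → ℕ∞) (l : Letter n) : ArtinGroup n M :=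
  if l.2 then gen n M l.1 else (gen n M l.1)⁻¹

/-- The group element represented by a word over the letters. -/
def wordElt (n : ℕ) (M : Fin n → Fin n → ℕ∞) (w : List (Letter n)) : ArtinGroup n M :=
  (w.map (toGen n M)).prod

/-- A word is geodesic if its length equals the word length of the element it represents. -/
def IsGeodesic (n : ℕ) (M : Fin n → Fin n → ℕ∞) (w : List (Letter n)) : Prop :=
  wordLength (genSet n M) (wordElt n M w) = w.length

/-- `h` is a left divisor of `g`: the factorisation `g = h ⬝ (h⁻¹ g)` is geodesic. -/
def IsLeftDiv {G : Type*} [Group G] (ℓ : G → ℕ) (h g : G) : Prop :=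
  ℓ h + ℓ (h⁻¹ * g) = ℓ g

/-- `h` is a right divisor of `g`: the factorisation `g = (g h⁻¹) ⬝ h` is geodesic. -/
def IsRightDiv {G : Type*} [Group G] (ℓ : G → ℕ) (h g : G) : Prop :=
  ℓ (g * h⁻¹) + ℓ h = ℓ g

/-- The two-generator ("dihedral") subgroup `G(i,j)`. -/
def Gij (n : ℕ) (M : Fin n → Fin n → ℕ∞) (i j : Fin n) : Subgroup (ArtinGroup n M) :=
  Subgroup.closure {gen n M i, gen n M j}

/-- The letters `x_i^{±1}, x_j^{±1}` as group elements. -/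
def lettersIJ (n : ℕ) (M : Fin n → Fin n → ℕ∞) (i j : Fin n) : Set (ArtinGroup n M) :=
  {gen n M i, (gen n M i)⁻¹, gen n M j, (gen n M j)⁻¹}

/-- The maximal `{x_i,x_j}`-prefix of a word. -/
def ijPrefix (n : ℕ) (i j : Fin n) (w : List (Letter n)) : List (Letter n) :=
  w.takeWhile (fun l => l.1 == i || l.1 == j)

/-- `h` is a left divisor of `g` lying in `G(i,j)` of maximal word length. -/
def IsMaxLD (n : ℕ) (M : Fin n → Fin n → ℕ∞) (i j : Fin n) (g h : ArtinGroup n M) : Prop :=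
  h ∈ Gij n M i j ∧ IsLeftDiv (ℓA n M) h g ∧
    ∀ h' ∈ Gij n M i j, IsLeftDiv (ℓA n M) h' g → ℓA n M h' ≤ ℓA n M h

/-- `h` is a right divisor of `g` lying in `G(i,j)` of maximal word length. -/
def IsMaxRD (n : ℕ) (M : Fin n → Fin n → ℕ∞) (i j : Fin n) (g h : ArtinGroup n M) : Prop :=
  h ∈ Gij n M i j ∧ IsRightDiv (ℓA n M) h g ∧
    ∀ h' ∈ Gij n M i j, IsRightDiv (ℓA n M) h' g → ℓA n M h' ≤ ℓA n M h

/-!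
An Artin group is the amalgam of its two-generator subgroups along the cyclic subgroups of the
generators. For large type, two geodesic words for the same element differ by exchanges of geodesic
two-generator subwords. The point is a rigidity statement for first letters: if the first letter of
a geodesic word can be exchanged for a letter in another generator, then that generator is unique,
because in a two-generator group of large type a word `z ^ t * x ^ r` with `t ≥ 1` never admits a
first letter `x ^ ±1`. It follows, by induction on the length, that each element has a greatest left
divisor in every `G(i,j)`. The same rigidity shows that when a geodesic word starts outside
`{x_i, x_j}`, this divisor is a power of one letter, and applied to what remains of a geodesic word
after its `{x_i, x_j}`-prefix this gives the last assertion.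

The facts about two-generator groups are read off Garside normal forms, on which the generators act
by permutations.
-/

/-! ### Words -/

section Words

variable {I H K : Type*} [Group H] [Group K]

/-- The value in `H` of the letter `x`, where `f` gives the values of the positive letters. -/
def letterVal (f : I → H) (x : I × Bool) : H := if x.2 then f x.1 else (f x.1)⁻¹

/-- The inverse letter. -/
def letterInv (x : I × Bool) : I × Bool := (x.1, !x.2)

/-- The value in `H` of the word `w`, where `f` gives the values of the positive letters. -/
def wordVal (f : I → H) (w : List (I × Bool)) : H := (w.map (letterVal f)).prod

@[simp] theorem letterInv_letterInv (x : I × Bool) : letterInv (letterInv x) = x := by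
  simp [letterInv]

@[simp] theorem letterVal_letterInv (f : I → H) (x : I × Bool) :
    letterVal f (letterInv x) = (letterVal f x)⁻¹ := by
  rcases x with ⟨i, _ | _⟩ <;> simp [letterVal, letterInv]

theorem eq_or_eq_letterInv {x y : I × Bool} (h : x.1 = y.1) : x = y ∨ x = letterInv y := by
  obtain ⟨i, b⟩ := x
  obtain ⟨j, c⟩ := y
  obtain rfl : i = j := h
  cases b <;> cases c <;> simp [letterInv]

@[simp] theorem wordVal_nil (f : I → H) : wordVal f [] = 1 := rfl

@[simp] theorem wordVal_cons (f : I → H) (x : I × Bool) (w : List (I × Bool)) :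
    wordVal f (x :: w) = letterVal f x * wordVal f w := by
  simp [wordVal]

@[simp] theorem wordVal_append (f : I → H) (u w : List (I × Bool)) :
    wordVal f (u ++ w) = wordVal f u * wordVal f w := by
  simp [wordVal]

@[simp] theorem wordVal_replicate (f : I → H) (r : ℕ) (x : I × Bool) :
    wordVal f (List.replicate r x) = letterVal f x ^ r := by
  simp [wordVal]

theorem wordVal_eq_lift (f : I → H) (w : List (I × Bool)) :
    wordVal f w = FreeGroup.lift f (FreeGroup.mk w) := by
  simp only [FreeGroup.lift_mk, Bool.cond_eq_ite]
  rfl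

theorem wordVal_invRev (f : I → H) (w : List (I × Bool)) :
    wordVal f (FreeGroup.invRev w) = (wordVal f w)⁻¹ := by
  rw [wordVal_eq_lift, wordVal_eq_lift, ← FreeGroup.inv_mk, map_inv]

theorem map_letterVal (φ : H →* K) (f : I → H) (x : I × Bool) :
    φ (letterVal f x) = letterVal (φ ∘ f) x := by
  rcases x with ⟨i, _ | _⟩ <;> simp [letterVal]

theorem map_wordVal (φ : H →* K) (f : I → H) (w : List (I × Bool)) :
    φ (wordVal f w) = wordVal (φ ∘ f) w := by
  induction w with
  | nil => simp
  | cons x w ih => simp [map_letterVal, ih]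

theorem wordVal_congr {f f' : I → H} {w : List (I × Bool)} (h : ∀ x ∈ w, f x.1 = f' x.1) :
    wordVal f w = wordVal f' w := by
  refine congrArg List.prod (List.map_congr_left fun x hx => ?_)
  rw [letterVal, letterVal, h x hx]

/-- Words with letters in `S` that have the same value for `f` also have the same value for `f'`:
the values of `f` on `S` satisfy no more relations than those of `f'`. -/
def Respects (S : Set I) (f : I → H) (f' : I → K) : Prop :=
  ∀ ⦃u v : List (I × Bool)⦄, (∀ x ∈ u, x.1 ∈ S) → (∀ x ∈ v, x.1 ∈ S) →
    wordVal f u = wordVal f v → wordVal f' u = wordVal f' v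

end Words

/-! ### Large dihedral length functions -/

/-- The properties of word length used in the proof, for a group generated by the values of `f`
on a set `S` of at most two indices. They hold in the two-generator Artin groups of large type and
in the free groups. The field `lt_mul_pow_mul_pow` is where large type enters: prepending `x` to
`z ^ t * x' ^ r` with `x' = x ^ ±1` is never a cancellation if `t ≥ 1`. -/
structure IsLargeDihedralLength {I D : Type*} [Group D] (S : Set I) (f : I → D) (L : D → ℕ) :
    Prop where
  map_one : L 1 = 0
  eq_one_of_eq_zero : ∀ h, L h = 0 → h = 1
  step : ∀ x h, x.1 ∈ S →
    L (letterVal f x * h) = L h + 1 ∨ L h = L (letterVal f x * h) + 1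
  exists_descent : ∀ h, L h ≠ 0 → ∃ x : I × Bool, x.1 ∈ S ∧ L (letterVal f x * h) + 1 = L h
  lt_inv_mul_of_mul_lt : ∀ x h, x.1 ∈ S →
    L (letterVal f x * h) < L h → L h < L ((letterVal f x)⁻¹ * h)
  lt_mul_pow_mul_pow : ∀ x x' z : I × Bool, x.1 ∈ S → z.1 ∈ S → x.1 ≠ z.1 → x'.1 = x.1 →
    ∀ t r : ℕ, 1 ≤ t → L (letterVal f z ^ t * letterVal f x' ^ r) <
      L (letterVal f x * (letterVal f z ^ t * letterVal f x' ^ r))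

/-- A family of groups, one for each unordered pair of indices, with large dihedral lengths.
Degenerate pairs `s(i, i)` are included, so that no side condition on pairs is needed. -/
structure DihedralSystem (I : Type*) where
  /-- the group attached to a pair -/
  D : Sym2 I → Type*
  /-- the group structure of `D s` -/
  group : ∀ s, Group (D s)
  /-- the generators of `D s`; only the values at the members of `s` matter -/
  gen : ∀ s, I → D s
  /-- the length function of `D s` -/
  len : ∀ s, D s → ℕ
  isLength : ∀ s : Sym2 I, IsLargeDihedralLength (s : Set I) (gen s) (len s)

namespace DihedralSystem

section Geodesic

variable {I : Type*} (P : DihedralSystem I)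

instance (s : Sym2 I) : Group (P.D s) := P.group s

/-- The letter `x` is a first letter of a geodesic word for `h`. -/
def IsFirst (s : Sym2 I) (h : P.D s) (x : I × Bool) : Prop :=
  P.len s ((letterVal (P.gen s) x)⁻¹ * h) < P.len s h

/-- The word `u` is a geodesic word of the group attached to the pair `s`. -/
def Geodesic (s : Sym2 I) (u : List (I × Bool)) : Prop :=
  (∀ x ∈ u, x.1 ∈ s) ∧ P.len s (wordVal (P.gen s) u) = u.length

variable {P} {s : Sym2 I} {x : I × Bool} {h : P.D s} {u v : List (I × Bool)}

theorem len_wordVal_mul_le (hu : ∀ x ∈ u, x.1 ∈ s) (h : P.D s) :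
    P.len s (wordVal (P.gen s) u * h) ≤ u.length + P.len s h := by
  induction u with
  | nil => simp
  | cons x u ih =>
    rw [List.forall_mem_cons] at hu
    have hstep := (P.isLength s).step x (wordVal (P.gen s) u * h) hu.1
    have hle := ih hu.2
    rw [wordVal_cons, mul_assoc, List.length_cons]
    omega

theorem len_wordVal_le (hu : ∀ x ∈ u, x.1 ∈ s) : P.len s (wordVal (P.gen s) u) ≤ u.length := by
  simpa [(P.isLength s).map_one] using len_wordVal_mul_le (P := P) hu 1

theorem geodesic_nil : P.Geodesic s [] := ⟨by simp, by simpa using (P.isLength s).map_one⟩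

theorem geodesic_cons : P.Geodesic s (x :: u) ↔
    x.1 ∈ s ∧ P.Geodesic s u ∧ ¬ P.IsFirst s (wordVal (P.gen s) u) (letterInv x) := by
  simp only [Geodesic, IsFirst, List.forall_mem_cons, letterVal_letterInv, inv_inv, wordVal_cons,
    List.length_cons]
  constructor
  · rintro ⟨⟨hx, hu⟩, hlen⟩
    have hle := len_wordVal_le (P := P) hu
    have hstep := (P.isLength s).step x (wordVal (P.gen s) u) hx
    exact ⟨hx, ⟨hu, by omega⟩, by omega⟩
  · rintro ⟨hx, ⟨hu, hlen⟩, hnot⟩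
    have hstep := (P.isLength s).step x (wordVal (P.gen s) u) hx
    exact ⟨⟨hx, hu⟩, by omega⟩

theorem Geodesic.of_eq (hu : P.Geodesic s u) (hv : ∀ x ∈ v, x.1 ∈ s)
    (hlen : v.length = u.length) (heq : wordVal (P.gen s) u = wordVal (P.gen s) v) :
    P.Geodesic s v :=
  ⟨hv, by rw [← heq, hu.2, hlen]⟩

theorem Geodesic.isFirst (hu : P.Geodesic s (x :: u)) :
    P.IsFirst s (wordVal (P.gen s) (x :: u)) x := by
  have hlen := (geodesic_cons.1 hu).2.1.2
  rw [IsFirst, hu.2, wordVal_cons, inv_mul_cancel_left, hlen]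
  simp

theorem exists_isFirst (hne : h ≠ 1) : ∃ x : I × Bool, x.1 ∈ s ∧ P.IsFirst s h x := by
  obtain ⟨x, hx, hlt⟩ := (P.isLength s).exists_descent h
    (fun h0 => hne ((P.isLength s).eq_one_of_eq_zero h h0))
  refine ⟨letterInv x, hx, ?_⟩
  rw [IsFirst, letterVal_letterInv, inv_inv]
  omega

theorem isFirst_mul_iff (hx : x.1 ∈ s) :
    P.IsFirst s (letterVal (P.gen s) x * h) x ↔ ¬ P.IsFirst s h (letterInv x) := by
  have hstep := (P.isLength s).step x h hx
  rw [IsFirst, IsFirst, letterVal_letterInv, inv_inv, inv_mul_cancel_left]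
  omega

theorem not_isFirst_pow_mul_pow {x' z : I × Bool} (hx : x.1 ∈ s) (hz : z.1 ∈ s)
    (hxz : x.1 ≠ z.1) (hx' : x'.1 = x.1) {t : ℕ} (ht : 1 ≤ t) (r : ℕ) :
    ¬ P.IsFirst s (letterVal (P.gen s) z ^ t * letterVal (P.gen s) x ^ r) x' := by
  have hlt := (P.isLength s).lt_mul_pow_mul_pow (letterInv x') x z (hx' ▸ hx) hz
    (hx' ▸ hxz) hx'.symm t r ht
  rw [letterVal_letterInv] at hlt
  exact hlt.not_gt

theorem IsFirst.not_letterInv (hmem : x.1 ∈ s) (hx : P.IsFirst s h x) :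
    ¬ P.IsFirst s h (letterInv x) := by
  have := (P.isLength s).lt_inv_mul_of_mul_lt (letterInv x) h hmem
  simp only [IsFirst, letterVal_letterInv, inv_inv] at hx this ⊢
  have := this hx
  omega

theorem IsFirst.geodesic_cons (hmem : x.1 ∈ s) (hx : P.IsFirst s h x) (hu : P.Geodesic s u)
    (heq : wordVal (P.gen s) u = (letterVal (P.gen s) x)⁻¹ * h) : P.Geodesic s (x :: u) := by
  refine DihedralSystem.geodesic_cons.2 ⟨hmem, hu, ?_⟩
  rw [IsFirst] at hx
  rw [heq, IsFirst, letterVal_letterInv, inv_inv, mul_inv_cancel_left]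
  omega

theorem exists_geodesic (h : P.D s) : ∃ u, P.Geodesic s u ∧ wordVal (P.gen s) u = h := by
  induction hN : P.len s h using Nat.strong_induction_on generalizing h with
  | _ N ih =>
    by_cases hne : h = 1
    · exact ⟨[], geodesic_nil, hne.symm⟩
    obtain ⟨x, hmem, hx⟩ := exists_isFirst hne
    obtain ⟨u, hu, heq⟩ := ih _ (lt_of_lt_of_eq hx hN) _ rfl
    exact ⟨x :: u, hx.geodesic_cons hmem hu heq, by rw [wordVal_cons, heq, mul_inv_cancel_left]⟩

theorem IsFirst.exists_geodesic_cons (hmem : x.1 ∈ s) (hx : P.IsFirst s h x) :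
    ∃ u, P.Geodesic s (x :: u) ∧ wordVal (P.gen s) (x :: u) = h := by
  obtain ⟨u, hu, heq⟩ := exists_geodesic ((letterVal (P.gen s) x)⁻¹ * h)
  exact ⟨u, hx.geodesic_cons hmem hu heq, by rw [wordVal_cons, heq, mul_inv_cancel_left]⟩

theorem len_mul_le (g h : P.D s) : P.len s (g * h) ≤ P.len s g + P.len s h := by
  obtain ⟨u, hu, rfl⟩ := exists_geodesic g
  exact (len_wordVal_mul_le hu.1 h).trans_eq (by rw [hu.2])

theorem Geodesic.left_of_append (h : P.Geodesic s (u ++ v)) : P.Geodesic s u := by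
  obtain ⟨hmem, hlen⟩ := h
  rw [List.forall_mem_append] at hmem
  rw [wordVal_append, List.length_append] at hlen
  have hu := len_wordVal_le (P := P) hmem.1
  have hv := len_wordVal_le (P := P) hmem.2
  have := len_mul_le (wordVal (P.gen s) u) (wordVal (P.gen s) v)
  exact ⟨hmem.1, by omega⟩

end Geodesic

section WordEquiv

variable {I : Type*} (P : DihedralSystem I)

/-- The equivalence of words generated by exchanging a two-letter geodesic subword for another
geodesic word with the same value in the group of that pair. It preserves length. -/
inductive WordEquiv : List (I × Bool) → List (I × Bool) → Prop
  | refl (w) : WordEquiv w w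
  | exchange {s : Sym2 I} {u v : List (I × Bool)} (w) (hu : P.Geodesic s u) (hv : P.Geodesic s v)
      (heq : wordVal (P.gen s) u = wordVal (P.gen s) v) : WordEquiv (u ++ w) (v ++ w)
  | cons (a) {u v} (huv : WordEquiv u v) : WordEquiv (a :: u) (a :: v)
  | trans {u v w} (huv : WordEquiv u v) (hvw : WordEquiv v w) : WordEquiv u w

/-- Some word equivalent to `w` starts with the letter `x`. -/
def StartsWith (w : List (I × Bool)) (x : I × Bool) : Prop := ∃ v, P.WordEquiv w (x :: v)

/-- Reduced words: no suffix `a :: v` is equivalent to a word that starts with a cancelling pair. -/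
def Reduced : List (I × Bool) → Prop
  | [] => True
  | a :: v => Reduced v ∧ ¬ P.StartsWith v (letterInv a)

/-- No word equivalent to `w` starts with a letter of the pair `s`. -/
def StartsOutside (s : Sym2 I) (w : List (I × Bool)) : Prop :=
  ∀ x : I × Bool, x.1 ∈ s → ¬ P.StartsWith w x

/-- The word `w` splits as a geodesic word for the element `h` of the group of `s`, followed by a
word `w₀` starting outside `s`; thus `h` is the greatest divisor of `w` on the left. -/
def Splits (s : Sym2 I) (w : List (I × Bool)) (h : P.D s) (w₀ : List (I × Bool)) : Prop :=
  ∃ u, P.Geodesic s u ∧ wordVal (P.gen s) u = h ∧ P.WordEquiv w (u ++ w₀) ∧ P.StartsOutside s w₀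

variable {P} {s : Sym2 I} {u v w w' w₀ w₀' : List (I × Bool)} {h : P.D s} {x : I × Bool}

@[symm] theorem WordEquiv.symm (huv : P.WordEquiv u v) : P.WordEquiv v u := by
  induction huv with
  | refl w => exact .refl w
  | exchange w hu hv heq => exact .exchange w hv hu heq.symm
  | cons a _ ih => exact .cons a ih
  | trans _ _ ih ih' => exact .trans ih' ih

theorem WordEquiv.length_eq (huv : P.WordEquiv u v) : u.length = v.length := by
  induction huv with
  | refl w => rfl
  | exchange w hu hv heq => simp [← hu.2, ← hv.2, heq]
  | cons a _ ih => simp [ih]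
  | trans _ _ ih ih' => exact ih.trans ih'

theorem WordEquiv.append_left (p : List (I × Bool)) (huv : P.WordEquiv u v) :
    P.WordEquiv (p ++ u) (p ++ v) := by
  induction p with
  | nil => exact huv
  | cons a p ih => exact .cons a ih

theorem WordEquiv.startsWith_iff (hww' : P.WordEquiv w w') :
    P.StartsWith w x ↔ P.StartsWith w' x :=
  ⟨fun ⟨v, hv⟩ => ⟨v, hww'.symm.trans hv⟩, fun ⟨v, hv⟩ => ⟨v, hww'.trans hv⟩⟩

theorem startsWith_cons (x : I × Bool) (w : List (I × Bool)) : P.StartsWith (x :: w) x :=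
  ⟨w, .refl _⟩

theorem StartsOutside.of_equiv (hw : P.StartsOutside s w) (hww' : P.WordEquiv w w') :
    P.StartsOutside s w' :=
  fun x hx hstart => hw x hx (hww'.startsWith_iff.2 hstart)

theorem Reduced.of_append_right (huv : P.Reduced (u ++ v)) : P.Reduced v := by
  induction u with
  | nil => exact huv
  | cons a u ih => exact ih huv.1

theorem splits_one (hw : P.StartsOutside s w) : P.Splits s w 1 w :=
  ⟨[], geodesic_nil, rfl, .refl _, hw⟩

theorem Splits.congr (hw : P.Splits s w h w₀) (hww' : P.WordEquiv w w')
    (h₀ : P.WordEquiv w₀ w₀') : P.Splits s w' h w₀' := by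
  obtain ⟨u, hu, heq, hwu, hout⟩ := hw
  exact ⟨u, hu, heq, hww'.symm.trans (hwu.trans (h₀.append_left u)), hout.of_equiv h₀⟩

theorem Splits.equiv_append (hw : P.Splits s w h w₀) (hu : P.Geodesic s u)
    (heq : wordVal (P.gen s) u = h) : P.WordEquiv w (u ++ w₀) := by
  obtain ⟨v, hv, rfl, hwv, -⟩ := hw
  exact hwv.trans (.exchange w₀ hv hu heq.symm)

theorem Splits.equiv (hw : P.Splits s w h w₀) (hw' : P.Splits s w' h w₀) : P.WordEquiv w w' := by
  obtain ⟨u, hu, heq, hwu, -⟩ := hw'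
  exact (hw.equiv_append hu heq).trans hwu.symm

theorem Splits.startsWith_of_isFirst (hw : P.Splits s w h w₀) (hmem : x.1 ∈ s)
    (hx : P.IsFirst s h x) : P.StartsWith w x := by
  obtain ⟨u, hu, heq⟩ := hx.exists_geodesic_cons hmem
  exact ⟨u ++ w₀, hw.equiv_append hu heq⟩

end WordEquiv

/-! ### Words of bounded length -/

/-- The properties of reduced words of length at most `N` that are proved by induction on `N`. -/
structure RegularUpTo {I : Type*} (P : DihedralSystem I) (N : ℕ) : Prop where
  reduced_of_equiv : ∀ {w w'}, w.length ≤ N → P.Reduced w → P.WordEquiv w w' → P.Reduced w'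
  geodesic_of_reduced_append : ∀ {s u v}, (u ++ v).length ≤ N → P.Reduced (u ++ v) →
    (∀ x ∈ u, x.1 ∈ s) → P.Geodesic s u
  splits_unique : ∀ {s w h w₀ h' w₀'}, w.length ≤ N → P.Reduced w → P.Splits s w h w₀ →
    P.Splits s w h' w₀' → h = h' ∧ P.WordEquiv w₀ w₀'

namespace RegularUpTo

variable {I : Type*} {P : DihedralSystem I} {N : ℕ} {s t : Sym2 I} {x z a : I × Bool}
  {p q u v w w' w₀ : List (I × Bool)} {h : P.D s}

theorem geodesic_append (hN : P.RegularUpTo N) (hl : (p ++ w).length ≤ N)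
    (hr : P.Reduced (p ++ w)) (hp : ∀ x ∈ p, x.1 ∈ s) (hu : P.Geodesic s u)
    (hwu : P.WordEquiv w (u ++ w₀)) : P.Geodesic s (p ++ u) := by
  have hequiv : P.WordEquiv (p ++ w) ((p ++ u) ++ w₀) := by
    rw [List.append_assoc]
    exact hwu.append_left p
  exact hN.geodesic_of_reduced_append (hequiv.length_eq.symm.trans_le hl)
    (hN.reduced_of_equiv hl hr hequiv) (List.forall_mem_append.2 ⟨hp, hu.1⟩)

theorem splits_append (hN : P.RegularUpTo N) (hl : (p ++ w).length ≤ N)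
    (hr : P.Reduced (p ++ w)) (hp : ∀ x ∈ p, x.1 ∈ s) (hw : P.Splits s w h w₀) :
    P.Splits s (p ++ w) (wordVal (P.gen s) p * h) w₀ := by
  obtain ⟨u, hu, rfl, hwu, hout⟩ := hw
  refine ⟨p ++ u, hN.geodesic_append hl hr hp hu hwu, wordVal_append _ _ _, ?_, hout⟩
  rw [List.append_assoc]
  exact hwu.append_left p

theorem splits_cons (hN : P.RegularUpTo N) (hl : (x :: w).length ≤ N)
    (hr : P.Reduced (x :: w)) (hx : x.1 ∈ s) (hw : P.Splits s w h w₀) :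
    P.Splits s (x :: w) (letterVal (P.gen s) x * h) w₀ := by
  simpa using hN.splits_append (p := [x]) hl hr (by simpa using hx) hw

theorem exists_splits (hN : P.RegularUpTo N) (s : Sym2 I) (hl : w.length ≤ N)
    (hr : P.Reduced w) : ∃ h w₀, P.Splits s w h w₀ := by
  induction hn : w.length generalizing w with
  | zero =>
    obtain rfl := List.length_eq_zero_iff.1 hn
    exact ⟨1, [], splits_one fun x _ ⟨v, hv⟩ => by simpa using hv.length_eq⟩
  | succ n ih =>
    by_cases hout : P.StartsOutside s w
    · exact ⟨1, w, splits_one hout⟩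
    simp only [StartsOutside, not_forall, not_not] at hout
    obtain ⟨x, hx, w', hww'⟩ := hout
    have hl' : (x :: w').length ≤ N := hww'.length_eq ▸ hl
    have hr' := hN.reduced_of_equiv hl hr hww'
    have hn' : w'.length = n := by simpa [hn] using hww'.length_eq.symm
    obtain ⟨h, w₀, hw'⟩ := ih (Nat.le_of_succ_le hl') hr'.1 hn'
    exact ⟨_, w₀, (hN.splits_cons hl' hr' hx hw').congr hww'.symm (.refl _)⟩

theorem isFirst_of_startsWith (hN : P.RegularUpTo N) (hl : w.length ≤ N) (hr : P.Reduced w)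
    (hw : P.Splits s w h w₀) (hx : x.1 ∈ s) (hstart : P.StartsWith w x) : P.IsFirst s h x := by
  obtain ⟨w', hww'⟩ := hstart
  have hl' : (x :: w').length ≤ N := hww'.length_eq ▸ hl
  have hr' := hN.reduced_of_equiv hl hr hww'
  obtain ⟨h', w₁, hw'⟩ := hN.exists_splits s (Nat.le_of_succ_le hl') hr'.1
  have hcons := (hN.splits_cons hl' hr' hx hw').congr hww'.symm (.refl _)
  obtain ⟨u, hu, rfl, hequiv, -⟩ := hw'
  have hgeo := hN.geodesic_append (p := [x]) hl' hr' (by simpa using hx) hu hequiv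
  rw [(hN.splits_unique hl hr hw hcons).1]
  exact hgeo.isFirst

theorem exists_splits_of_equiv_append (hN : P.RegularUpTo N) (hl : w.length ≤ N)
    (hr : P.Reduced w) (hw : P.Splits s w h w₀) (hww' : P.WordEquiv w (p ++ w'))
    (hp : ∀ x ∈ p, x.1 ∈ s) : ∃ k, h = wordVal (P.gen s) p * k ∧ P.Splits s w' k w₀ := by
  have hl' : (p ++ w').length ≤ N := hww'.length_eq ▸ hl
  have hr' := hN.reduced_of_equiv hl hr hww'
  obtain ⟨k, w₁, hw'⟩ := hN.exists_splits s ((List.sublist_append_right p w').length_le.trans hl')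
    hr'.of_append_right
  obtain ⟨heq, hequiv⟩ := hN.splits_unique hl hr hw
    ((hN.splits_append hl' hr' hp hw').congr hww'.symm (.refl _))
  exact ⟨k, heq, hw'.congr (.refl _) hequiv.symm⟩

theorem not_startsWith_letterInv (hN : P.RegularUpTo N) (hl : w.length ≤ N) (hr : P.Reduced w)
    (hx : P.StartsWith w x) : ¬ P.StartsWith w (letterInv x) := by
  intro hx'
  have hmem : x.1 ∈ s(x.1, x.1) := Sym2.mem_mk_left _ _
  obtain ⟨h, w₀, hw⟩ := hN.exists_splits s(x.1, x.1) hl hr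
  exact (hN.isFirst_of_startsWith hl hr hw hmem hx).not_letterInv hmem
    (hN.isFirst_of_startsWith hl hr hw hmem hx')

theorem exists_equiv_replicate_append (hN : P.RegularUpTo N) (x : I × Bool) (hl : w.length ≤ N)
    (hr : P.Reduced w) (hx : ¬ P.StartsWith w (letterInv x)) :
    ∃ r w', P.WordEquiv w (List.replicate r x ++ w') ∧ P.Reduced w' ∧
      w'.length + r = w.length ∧ ¬ P.StartsWith w' x ∧ ¬ P.StartsWith w' (letterInv x) := by
  induction hn : w.length using Nat.strong_induction_on generalizing w with
  | _ n ih =>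
    subst hn
    by_cases hstart : P.StartsWith w x
    · obtain ⟨v, hwv⟩ := hstart
      have hlen : w.length = v.length + 1 := hwv.length_eq
      have hr' := hN.reduced_of_equiv hl hr hwv
      obtain ⟨r, w', hvw', hrw', hlen', hout⟩ := ih _ (by omega) (by omega) hr'.1 hr'.2 rfl
      exact ⟨r + 1, w', hwv.trans (hvw'.cons x), hrw', by omega, hout⟩
    · exact ⟨0, w, .refl _, hr, rfl, hstart, hx⟩

theorem exists_equiv_replicate_append_of_startsWith (hN : P.RegularUpTo N) (hl : w.length ≤ N)
    (hr : P.Reduced w) (hx : P.StartsWith w x) :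
    ∃ r w', 1 ≤ r ∧ P.WordEquiv w (List.replicate r x ++ w') ∧ P.Reduced w' ∧
      w'.length + r = w.length ∧ ¬ P.StartsWith w' x ∧ ¬ P.StartsWith w' (letterInv x) := by
  obtain ⟨r, w', hequiv, hr', hlen, hout⟩ := hN.exists_equiv_replicate_append x hl hr
    (hN.not_startsWith_letterInv hl hr hx)
  refine ⟨r, w', Nat.one_le_iff_ne_zero.2 ?_, hequiv, hr', hlen, hout⟩
  rintro rfl
  exact hout.1 (hequiv.startsWith_iff.1 hx)

end RegularUpTo

/-! ### First letters of reduced words -/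

section FirstLetters

variable {I : Type*} {P : DihedralSystem I} {N : ℕ} {s t : Sym2 I} {a b c x x' y z : I × Bool}
  {p q u v v' w w' w₀ q₀ v₀ v₁ : List (I × Bool)} {h k : P.D s} {h' : P.D t}

theorem Splits.isFirst_mul (hv : P.Splits s v h v₀) (ha : a.1 ∈ s) (hr : P.Reduced (a :: v)) :
    P.IsFirst s (letterVal (P.gen s) a * h) a :=
  (isFirst_mul_iff ha).2 fun hfirst => hr.2 (hv.startsWith_of_isFirst ha hfirst)

theorem Splits.exists_startsWith (hq : P.Splits s q k q₀) (hx : x.1 ∈ s) (hz : z.1 ∈ s)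
    (hxz : x.1 ≠ z.1) (hk : k ≠ 1) (hqx : ¬ P.StartsWith q x)
    (hqx' : ¬ P.StartsWith q (letterInv x)) : ∃ d, P.StartsWith q (z.1, d) := by
  obtain ⟨⟨c, d⟩, hc, hfirst⟩ := exists_isFirst hk
  have hstart := hq.startsWith_of_isFirst hc hfirst
  rw [(Sym2.mem_and_mem_iff hxz).1 ⟨hx, hz⟩, Sym2.mem_iff] at hc
  obtain hcx | hcz := hc
  · obtain heq | heq := eq_or_eq_letterInv (x := (c, d)) (y := x) hcx
    · exact absurd (heq ▸ hstart) hqx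
    · exact absurd (heq ▸ hstart) hqx'
  · exact ⟨d, hcz ▸ hstart⟩

theorem Splits.exists_startsWith_of_isFirst_pow_mul (hq : P.Splits s q k q₀) (hx : x.1 ∈ s)
    (hz : z.1 ∈ s) (hxz : x.1 ≠ z.1) {t : ℕ} (ht : 1 ≤ t)
    (hfirst : P.IsFirst s (letterVal (P.gen s) z ^ t * k) x) (hqz : ¬ P.StartsWith q z)
    (hqz' : ¬ P.StartsWith q (letterInv z)) : ∃ d, P.StartsWith q (x.1, d) := by
  refine hq.exists_startsWith hz hx hxz.symm ?_ hqz hqz'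
  rintro rfl
  exact not_isFirst_pow_mul_pow hx hz hxz rfl ht 0 (by rwa [pow_zero])

namespace RegularUpTo

theorem exists_splits_of_equiv_replicate_append (hN : P.RegularUpTo N) (hl : w.length ≤ N)
    (hr : P.Reduced w) (hw : P.Splits s w h w₀) (hx : x.1 ∈ s) {r : ℕ}
    (hww' : P.WordEquiv w (List.replicate r x ++ w')) :
    ∃ k, h = letterVal (P.gen s) x ^ r * k ∧ P.Splits s w' k w₀ := by
  simpa using hN.exists_splits_of_equiv_append hl hr hw hww'
    fun y hy => (List.eq_of_mem_replicate hy).symm ▸ hx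

/-- Remove from `q` its maximal initial power of `x`. By `lt_mul_pow_mul_pow` the rest still starts
with powers of both `y` and `z`, and the situation repeats itself with a shorter word and the
letters permuted cyclically. -/
theorem not_isFirst_pow_mul (hN : P.RegularUpTo N) (hl : q.length ≤ N) (hr : P.Reduced q)
    (hq : P.Splits s q k q₀) (hx : x.1 ∈ s) (hz : z.1 ∈ s) (hxy : x.1 ≠ y.1) (hxz : x.1 ≠ z.1)
    (hyz : y.1 ≠ z.1) (hqx : P.StartsWith q x) (hqy : P.StartsWith q y) (hx' : x'.1 = x.1)
    {t : ℕ} (ht : 1 ≤ t) : ¬ P.IsFirst s (letterVal (P.gen s) z ^ t * k) x' := by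
  induction hn : q.length using Nat.strong_induction_on generalizing q s x x' y z q₀ t with
  | _ n ih =>
  subst hn
  intro hfirst
  obtain ⟨r, q', hpos, hequiv, hr', hlen, hq'x, hq'x'⟩ :=
    hN.exists_equiv_replicate_append_of_startsWith hl hr hqx
  obtain ⟨b, hq'z⟩ : ∃ b, P.StartsWith q' (z.1, b) := by
    obtain ⟨k', rfl, hk'⟩ := hN.exists_splits_of_equiv_replicate_append hl hr hq hx hequiv
    refine hk'.exists_startsWith hx hz hxz ?_ hq'x hq'x'
    rintro rfl
    rw [mul_one] at hfirst
    exact not_isFirst_pow_mul_pow hx hz hxz hx' ht r hfirst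
  have hmemy : y.1 ∈ s(x.1, y.1) := Sym2.mem_mk_right _ _
  have hmemx : x.1 ∈ s(x.1, y.1) := Sym2.mem_mk_left _ _
  obtain ⟨g, w₀, hg⟩ := hN.exists_splits s(x.1, y.1) hl hr
  have hgy := hN.isFirst_of_startsWith hl hr hg hmemy hqy
  obtain ⟨g', rfl, hg'⟩ := hN.exists_splits_of_equiv_replicate_append hl hr hg hmemx hequiv
  obtain ⟨d, hq'y⟩ := hg'.exists_startsWith_of_isFirst_pow_mul hmemy hmemx hxy.symm hpos hgy
    hq'x hq'x'
  exact ih q'.length (by omega) (x := (y.1, d)) (x' := y) (y := (z.1, b)) (by omega) hr' hg'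
    hmemy hmemx hyz hxy.symm hxz.symm hq'y hq'z rfl hpos rfl hgy

theorem eq_of_isFirst_of_isFirst (hN : P.RegularUpTo N) (hl : v.length ≤ N)
    (hr : P.Reduced (b :: v)) (ha : a.1 ∈ s) (hbs : b.1 ∈ s) (hbt : b.1 ∈ t) (hc : c.1 ∈ t)
    (hab : a.1 ≠ b.1) (hcb : c.1 ≠ b.1) (hv : P.Splits s v h v₀) (hv' : P.Splits t v h' v₁)
    (hfirst : P.IsFirst s (letterVal (P.gen s) b * h) a)
    (hfirst' : P.IsFirst t (letterVal (P.gen t) b * h') c) : a.1 = c.1 := by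
  obtain ⟨r, q, hequiv, hrq, hlen, hqb, hqb'⟩ := hN.exists_equiv_replicate_append b hl hr.1 hr.2
  obtain ⟨k, rfl, hk⟩ := hN.exists_splits_of_equiv_replicate_append hl hr.1 hv hbs hequiv
  obtain ⟨k', rfl, hk'⟩ := hN.exists_splits_of_equiv_replicate_append hl hr.1 hv' hbt hequiv
  rw [← mul_assoc, ← pow_succ'] at hfirst hfirst'
  obtain ⟨d, hqa⟩ := hk.exists_startsWith_of_isFirst_pow_mul ha hbs hab (by omega) hfirst hqb hqb'
  obtain ⟨e, hqc⟩ := hk'.exists_startsWith_of_isFirst_pow_mul hc hbt hcb (by omega) hfirst' hqb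
    hqb'
  by_contra hac
  exact hN.not_isFirst_pow_mul (x := (a.1, d)) (x' := a) (y := (c.1, e)) (by omega) hrq hk
    ha hbs hac hab hcb hqa hqc rfl (Nat.le_add_left 1 r) hfirst

theorem reduced_geodesic_append (hN : P.RegularUpTo N) (hr : P.Reduced w₀)
    (hout : P.StartsOutside s w₀) (hu : P.Geodesic s u) (hl : (u ++ w₀).length ≤ N + 1) :
    P.Reduced (u ++ w₀) := by
  induction u with
  | nil => exact hr
  | cons a u ih =>
    obtain ⟨ha, hu, hnot⟩ := geodesic_cons.1 hu
    have hl' : (u ++ w₀).length ≤ N := Nat.le_of_succ_le_succ hl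
    have hr' := ih hu (by omega)
    exact ⟨hr', fun hstart =>
      hnot (hN.isFirst_of_startsWith hl' hr' ⟨u, hu, rfl, .refl _, hout⟩ ha hstart)⟩

theorem geodesic_cons_append (hN : P.RegularUpTo N) (hl : (p ++ v).length ≤ N)
    (hr : P.Reduced (a :: (p ++ v))) (ha : a.1 ∈ s) (hp : ∀ x ∈ p, x.1 ∈ s)
    (hu : P.Geodesic s u) (hv : P.Splits s v (wordVal (P.gen s) u) w₀) :
    P.Geodesic s (a :: (p ++ u)) := by
  refine geodesic_cons.2 ⟨ha, hN.geodesic_append hl hr.1 hp hu (hv.equiv_append hu rfl), ?_⟩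
  rw [wordVal_append]
  exact fun hfirst => hr.2 ((hN.splits_append hl hr.1 hp hv).startsWith_of_isFirst ha hfirst)

end RegularUpTo

end FirstLetters

/-! ### Equivalence of reduced words seen from the first letter -/

section HeadRel

/-- Describes how equivalent reduced words differ at the first letter: either the first letters
agree and the tails are equivalent, or a single exchange for the pair of first letters leads from
one word to the other. -/
inductive HeadRel {I : Type*} (P : DihedralSystem I) :
    List (I × Bool) → List (I × Bool) → Prop
  | nil : HeadRel P [] []
  | same (a) {v v'} (hvv' : P.WordEquiv v v') : HeadRel P (a :: v) (a :: v')
  | exchange {s : Sym2 I} {a b : I × Bool} {v v' v₀ h h'} (ha : a.1 ∈ s) (hb : b.1 ∈ s)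
      (hab : a.1 ≠ b.1) (hv : P.Splits s v h v₀) (hv' : P.Splits s v' h' v₀)
      (heq : letterVal (P.gen s) a * h = letterVal (P.gen s) b * h') : HeadRel P (a :: v) (b :: v')

variable {I : Type*} {P : DihedralSystem I} {N : ℕ} {s t : Sym2 I} {a b : I × Bool}
  {p q u v v' w w' w'' w₀ w₀' : List (I × Bool)} {h h' : P.D s}

theorem HeadRel.refl : ∀ w, P.HeadRel w w
  | [] => .nil
  | a :: v => .same a (.refl v)

theorem HeadRel.equiv_tail (h : P.HeadRel (a :: v) (a :: v')) : P.WordEquiv v v' := by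
  cases h with
  | same _ hvv' => exact hvv'
  | exchange _ _ hab => exact absurd rfl hab

namespace RegularUpTo

/-- Two consecutive exchanges combine into one move: by `eq_of_isFirst_of_isFirst` the first letter
of the word in the middle can be exchanged with one other generator only. -/
theorem headRel_trans (hN : P.RegularUpTo N) (hl : w'.length ≤ N + 1) (hr : P.Reduced w)
    (hr' : P.Reduced w') (hr'' : P.Reduced w'') (hww' : P.HeadRel w w')
    (hww'' : P.HeadRel w' w'') : P.HeadRel w w'' := by
  cases hww' with
  | nil => exact hww''
  | same a hvv' =>
    cases hww'' with
    | same _ hvv'' => exact .same a (hvv'.trans hvv'')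
    | exchange ha hb hab hv hv' heq =>
      exact .exchange ha hb hab (hv.congr hvv'.symm (.refl _)) hv' heq
  | exchange ha hb hab hv hv' heq =>
    cases hww'' with
    | same _ hvv'' => exact .exchange ha hb hab hv (hv'.congr hvv'' (.refl _)) heq
    | exchange hbt hc hbc hk hk' heq' =>
      replace hl := Nat.le_of_succ_le_succ hl
      have hfirst := hv.isFirst_mul ha hr
      have hfirst' := hk'.isFirst_mul hc hr''
      rw [heq] at hfirst
      rw [← heq'] at hfirst'
      have hac := hN.eq_of_isFirst_of_isFirst hl hr' ha hb hbt hc hab hbc.symm hv' hk hfirst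
        hfirst'
      obtain rfl := Sym2.eq_of_ne_mem hab ha hb (hac ▸ hc) hbt
      obtain ⟨rfl, hequiv⟩ := hN.splits_unique hl hr'.1 hv' hk
      obtain rfl | rfl := eq_or_eq_letterInv hac
      · obtain rfl := mul_left_cancel (heq.trans heq')
        exact .same _ (hv.equiv (hk'.congr (.refl _) hequiv.symm))
      · exact absurd hfirst (hfirst'.not_letterInv hc)

theorem reduced_append_of_wordVal_eq (hN : P.RegularUpTo N) (hl : (p ++ v).length ≤ N + 1)
    (hr : P.Reduced (p ++ v)) (hp : P.Geodesic s p) (hq : P.Geodesic s q)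
    (heq : wordVal (P.gen s) p = wordVal (P.gen s) q) : P.Reduced (q ++ v) := by
  have hlen : p.length = q.length := by rw [← hp.2, ← hq.2, heq]
  match p, q, hlen with
  | [], [], _ => exact hr
  | a :: p, b :: q, hlen =>
    replace hl : (p ++ v).length ≤ N := Nat.le_of_succ_le_succ hl
    have hlq : (q ++ v).length ≤ N := by
      simp only [List.length_append, List.length_cons] at hl hlen ⊢
      omega
    have hlv := (List.sublist_append_right p v).length_le.trans hl
    obtain ⟨_, v₀, hv⟩ := hN.exists_splits s hlv hr.1.of_append_right
    obtain ⟨u, hu, rfl, hvu, hout⟩ := id hv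
    obtain ⟨ha, hp'⟩ := List.forall_mem_cons.1 hp.1
    have hpu : P.Geodesic s (a :: p ++ u) := hN.geodesic_cons_append hl hr ha hp' hu hv
    have hqu : P.Geodesic s (b :: q ++ u) :=
      hpu.of_eq (List.forall_mem_append.2 ⟨hq.1, hu.1⟩) (by simp_all) (by
        rw [wordVal_append, heq, wordVal_append])
    have hequiv : P.WordEquiv (q ++ (u ++ v₀)) (q ++ v) := hvu.symm.append_left q
    have hlen' : (b :: q ++ u ++ v₀).length ≤ N + 1 := by
      rw [List.append_assoc]
      exact Nat.succ_le_succ (hequiv.length_eq.trans_le hlq)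
    have hr₀ := (hN.reduced_of_equiv hlv hr.1.of_append_right hvu).of_append_right
    have hr' := hN.reduced_geodesic_append hr₀ hout hqu hlen'
    rw [List.append_assoc, List.cons_append] at hr'
    exact ⟨hN.reduced_of_equiv (hequiv.length_eq.trans_le hlq) hr'.1 hequiv,
      fun hstart => hr'.2 (hequiv.startsWith_iff.2 hstart)⟩

theorem headRel_append_of_wordVal_eq (hN : P.RegularUpTo N) (hl : (p ++ v).length ≤ N + 1)
    (hr : P.Reduced (p ++ v)) (hr' : P.Reduced (q ++ v)) (hp : P.Geodesic s p) (hq : P.Geodesic s q)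
    (heq : wordVal (P.gen s) p = wordVal (P.gen s) q) : P.HeadRel (p ++ v) (q ++ v) := by
  have hlen : p.length = q.length := by rw [← hp.2, ← hq.2, heq]
  match p, q, hlen with
  | [], [], _ => exact .refl v
  | a :: p, b :: q, hlen =>
    obtain ⟨ha, hp', -⟩ := geodesic_cons.1 hp
    obtain ⟨hb, hq', -⟩ := geodesic_cons.1 hq
    by_cases hab : a.1 = b.1
    · obtain rfl | rfl := eq_or_eq_letterInv hab
      · exact .same _ (.exchange v hp' hq' (by simpa using heq))
      · exact absurd (heq ▸ hp.isFirst) (hq.isFirst.not_letterInv hb)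
    replace hl : (p ++ v).length ≤ N := Nat.le_of_succ_le_succ hl
    obtain ⟨k, v₀, hv⟩ := hN.exists_splits s ((List.sublist_append_right p v).length_le.trans hl)
      hr.1.of_append_right
    have hl' : (q ++ v).length ≤ N := by
      simp only [List.length_append, List.length_cons] at hl hlen ⊢
      omega
    refine .exchange ha hb hab (hN.splits_append hl hr.1 hp'.1 hv)
      (hN.splits_append hl' hr'.1 hq'.1 hv) ?_
    rw [← mul_assoc, ← mul_assoc, ← wordVal_cons, heq, wordVal_cons]

theorem reduced_of_equiv_succ (hN : P.RegularUpTo N) (hl : w.length ≤ N + 1) (hr : P.Reduced w)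
    (hww' : P.WordEquiv w w') : P.Reduced w' := by
  induction hww' with
  | refl => exact hr
  | exchange w hu hv heq => exact hN.reduced_append_of_wordVal_eq hl hr hu hv heq
  | cons a huv =>
    exact ⟨hN.reduced_of_equiv (Nat.le_of_succ_le_succ hl) hr.1 huv,
      fun hstart => hr.2 (huv.startsWith_iff.2 hstart)⟩
  | trans huv _ ih ih' => exact ih' (huv.length_eq ▸ hl) (ih hl hr)

theorem headRel_of_equiv (hN : P.RegularUpTo N) (hl : w.length ≤ N + 1) (hr : P.Reduced w)
    (hww' : P.WordEquiv w w') : P.HeadRel w w' := by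
  induction hww' with
  | refl => exact .refl _
  | exchange w hu hv heq =>
    exact hN.headRel_append_of_wordVal_eq hl hr
      (hN.reduced_append_of_wordVal_eq hl hr hu hv heq) hu hv heq
  | cons a huv => exact .same a huv
  | trans huv hvw ih ih' =>
    have hl' := huv.length_eq ▸ hl
    have hr' := hN.reduced_of_equiv_succ hl hr huv
    exact hN.headRel_trans hl' hr hr' (hN.reduced_of_equiv_succ hl' hr' hvw) (ih hl hr)
      (ih' hl' hr')

theorem geodesic_of_reduced_append_succ (hN : P.RegularUpTo N) (hl : (u ++ v).length ≤ N + 1)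
    (hr : P.Reduced (u ++ v)) (hu : ∀ x ∈ u, x.1 ∈ s) : P.Geodesic s u := by
  cases u with
  | nil => exact geodesic_nil
  | cons a u =>
    rw [List.forall_mem_cons] at hu
    replace hl : (u ++ v).length ≤ N := Nat.le_of_succ_le_succ hl
    obtain ⟨_, w₀, hv⟩ := hN.exists_splits s
      ((List.sublist_append_right u v).length_le.trans hl) hr.1.of_append_right
    obtain ⟨u', hu', rfl, -⟩ := id hv
    exact (hN.geodesic_cons_append hl hr hu.1 hu.2 hu' hv).left_of_append (u := a :: u)

theorem splits_unique_succ (hN : P.RegularUpTo N) (hl : w.length ≤ N + 1) (hr : P.Reduced w)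
    (hw : P.Splits s w h w₀) (hw' : P.Splits s w h' w₀') : h = h' ∧ P.WordEquiv w₀ w₀' := by
  obtain ⟨u, hu, rfl, hwu, hout⟩ := hw
  obtain ⟨u', hu', rfl, hwu', hout'⟩ := hw'
  have hequiv := hwu.symm.trans hwu'
  match u, u' with
  | [], [] => exact ⟨rfl, hequiv⟩
  | [], b :: u' => exact absurd ⟨_, hequiv⟩ (hout b (hu'.1 b (by simp)))
  | a :: u, [] => exact absurd ⟨_, hequiv.symm⟩ (hout' a (hu.1 a (by simp)))
  | a :: u, b :: u' =>
    obtain ⟨ha, hu, -⟩ := geodesic_cons.1 hu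
    obtain ⟨hb, hu', -⟩ := geodesic_cons.1 hu'
    have hl₁ := hwu.length_eq ▸ hl
    have hl₂ := hwu'.length_eq ▸ hl
    have hr₁ := hN.reduced_of_equiv_succ hl hr hwu
    have hr₂ := hN.reduced_of_equiv_succ hl hr hwu'
    have hv : P.Splits s (u ++ w₀) (wordVal (P.gen s) u) w₀ := ⟨u, hu, rfl, .refl _, hout⟩
    have hv' : P.Splits s (u' ++ w₀') (wordVal (P.gen s) u') w₀' := ⟨u', hu', rfl, .refl _, hout'⟩
    rw [wordVal_cons, wordVal_cons]
    cases hN.headRel_of_equiv hl₁ hr₁ hequiv with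
    | same _ hvv' =>
      obtain ⟨heq, hequiv₀⟩ := hN.splits_unique (Nat.le_of_succ_le_succ hl₁) hr₁.1 hv
        (hv'.congr hvv'.symm (.refl _))
      exact ⟨by rw [heq], hequiv₀⟩
    | exchange ha' hb' hab hk hk' heq =>
      obtain rfl := Sym2.eq_of_ne_mem hab ha hb ha' hb'
      obtain ⟨rfl, hequiv₀⟩ := hN.splits_unique (Nat.le_of_succ_le_succ hl₁) hr₁.1 hv hk
      obtain ⟨rfl, hequiv₁⟩ := hN.splits_unique (Nat.le_of_succ_le_succ hl₂) hr₂.1 hv' hk'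
      exact ⟨heq, hequiv₀.trans hequiv₁.symm⟩

end RegularUpTo

theorem regularUpTo_zero (P : DihedralSystem I) : P.RegularUpTo 0 where
  reduced_of_equiv hl _ hww' := by
    rw [Nat.le_zero, hww'.length_eq, List.length_eq_zero_iff] at hl
    exact hl ▸ trivial
  geodesic_of_reduced_append hl _ _ := by
    rw [Nat.le_zero, List.length_eq_zero_iff, List.append_eq_nil_iff] at hl
    exact hl.1 ▸ geodesic_nil
  splits_unique hl _ hw hw' := by
    obtain ⟨u, -, rfl, hwu, -⟩ := hw
    obtain ⟨u', -, rfl, hwu', -⟩ := hw'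
    have hl' := hwu'.length_eq ▸ hl
    rw [hwu.length_eq] at hl
    rw [Nat.le_zero, List.length_eq_zero_iff, List.append_eq_nil_iff] at hl hl'
    obtain ⟨⟨rfl, rfl⟩, rfl, rfl⟩ := And.intro hl hl'
    exact ⟨rfl, .refl _⟩

theorem regularUpTo (P : DihedralSystem I) (N : ℕ) : P.RegularUpTo N := by
  induction N with
  | zero => exact P.regularUpTo_zero
  | succ N hN =>
    exact ⟨hN.reduced_of_equiv_succ, hN.geodesic_of_reduced_append_succ, hN.splits_unique_succ⟩

/-! ### Words of arbitrary length -/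

theorem Reduced.of_equiv (hr : P.Reduced w) (hww' : P.WordEquiv w w') : P.Reduced w' :=
  (P.regularUpTo _).reduced_of_equiv le_rfl hr hww'

theorem Reduced.exists_splits (s : Sym2 I) (hr : P.Reduced w) : ∃ h w₀, P.Splits s w h w₀ :=
  (P.regularUpTo _).exists_splits s le_rfl hr

theorem Reduced.splits_append (hr : P.Reduced (p ++ w)) (hp : ∀ x ∈ p, x.1 ∈ s)
    (hw : P.Splits s w h w₀) : P.Splits s (p ++ w) (wordVal (P.gen s) p * h) w₀ :=
  (P.regularUpTo _).splits_append le_rfl hr hp hw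

theorem Reduced.exists_splits_of_equiv_append (hr : P.Reduced w) (hw : P.Splits s w h w₀)
    (hww' : P.WordEquiv w (p ++ w')) (hp : ∀ x ∈ p, x.1 ∈ s) :
    ∃ k, h = wordVal (P.gen s) p * k ∧ P.Splits s w' k w₀ :=
  (P.regularUpTo _).exists_splits_of_equiv_append le_rfl hr hw hww' hp

theorem Reduced.equiv_of_cons (hr : P.Reduced (a :: v))
    (hvv' : P.WordEquiv (a :: v) (a :: v')) : P.WordEquiv v v' :=
  ((P.regularUpTo v.length).headRel_of_equiv le_rfl hr hvv').equiv_tail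

end HeadRel

/-! ### The divisor of a word starting outside a pair -/

section StartingOutside

variable {I : Type*} {P : DihedralSystem I} {s : Sym2 I} {a c x : I × Bool}
  {v v₀ : List (I × Bool)} {k : P.D s}

theorem Reduced.exists_pow_of_startsWith_of_isFirst (hr : P.Reduced v) (hc : P.StartsWith v c)
    (hcs : c.1 ∉ s) (hv : P.Splits s v k v₀) (hx : x.1 ∈ s) (hfirst : P.IsFirst s k x) :
    ∃ r : ℕ, P.Geodesic s (List.replicate r x) ∧ k = letterVal (P.gen s) x ^ r := by
  have hN := P.regularUpTo v.length
  have hcx : c.1 ≠ x.1 := fun h => hcs (h ▸ hx)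
  have hstart := hv.startsWith_of_isFirst hx hfirst
  obtain ⟨r, q, hpos, hequiv, hrq, hlen, hqx, hqx'⟩ :=
    hN.exists_equiv_replicate_append_of_startsWith le_rfl hr hstart
  obtain ⟨k', rfl, hk'⟩ := hN.exists_splits_of_equiv_replicate_append le_rfl hr hv hx hequiv
  by_cases hk1 : k' = 1
  · refine ⟨r, ?_, by rw [hk1, mul_one]⟩
    exact hN.geodesic_of_reduced_append hequiv.length_eq.ge (hr.of_equiv hequiv)
      fun y hy => (List.eq_of_mem_replicate hy).symm ▸ hx
  exfalso
  obtain ⟨⟨z, b⟩, hz, hzfirst⟩ := exists_isFirst hk1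
  have hqz := hk'.startsWith_of_isFirst hz hzfirst
  have hxz : x.1 ≠ z := fun h => by
    obtain h | h := eq_or_eq_letterInv (x := (z, b)) (y := x) h.symm
    · exact hqx (h ▸ hqz)
    · exact hqx' (h ▸ hqz)
  have hmemc : c.1 ∈ s(c.1, x.1) := Sym2.mem_mk_left _ _
  have hmemx : x.1 ∈ s(c.1, x.1) := Sym2.mem_mk_right _ _
  obtain ⟨g, w₀, hg⟩ := hr.exists_splits s(c.1, x.1)
  have hgc := hN.isFirst_of_startsWith le_rfl hr hg hmemc hc
  obtain ⟨g', rfl, hg'⟩ := hN.exists_splits_of_equiv_replicate_append le_rfl hr hg hmemx hequiv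
  obtain ⟨d, hqc⟩ := hg'.exists_startsWith_of_isFirst_pow_mul hmemc hmemx hcx hpos hgc hqx hqx'
  exact hN.not_isFirst_pow_mul (x := (c.1, d)) (x' := c) (y := (z, b)) (by omega) hrq hg' hmemc
    hmemx (fun h => hcs ((show c.1 = z from h) ▸ hz)) hcx hxz.symm hqc hqz rfl hpos hgc

/-- If `v` starts with a letter outside the pair `s`, then its greatest divisor in the group of `s`
is a power of one letter, for the same reason as in `RegularUpTo.eq_of_isFirst_of_isFirst`. -/
theorem Reduced.exists_splits_replicate (hr : P.Reduced v) (hv : ∀ c ∈ v.head?, c.1 ∉ s) :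
    ∃ a : I × Bool, a.1 ∈ s ∧ ∃ r v₀, P.Geodesic s (List.replicate r a) ∧
      P.Splits s v (wordVal (P.gen s) (List.replicate r a)) v₀ := by
  obtain ⟨k, v₀, hk⟩ := hr.exists_splits s
  by_cases hk1 : k = 1
  · subst hk1
    induction s with
    | _ i j => exact ⟨(i, true), Sym2.mem_mk_left _ _, 0, v₀, geodesic_nil, hk⟩
  obtain ⟨a, ha, hfirst⟩ := exists_isFirst hk1
  cases v with
  | nil =>
    obtain ⟨_, hstart⟩ := hk.startsWith_of_isFirst ha hfirst
    exact absurd hstart.length_eq (Nat.zero_ne_add_one _)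
  | cons c v =>
    obtain ⟨r, hgeo, rfl⟩ := hr.exists_pow_of_startsWith_of_isFirst (startsWith_cons c v)
      (hv c rfl) hk ha hfirst
    exact ⟨a, ha, r, v₀, hgeo, by rwa [wordVal_replicate]⟩

end StartingOutside

/-! ### The action on classes of reduced words -/

section Action

variable {I : Type*} {P : DihedralSystem I} {s : Sym2 I} {a x : I × Bool}
  {u w w' w₀ : List (I × Bool)} {h : P.D s}

/-- Equivalence, as a setoid on reduced words. -/
def reducedSetoid (P : DihedralSystem I) : Setoid {w : List (I × Bool) // P.Reduced w} where
  r u v := P.WordEquiv u v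
  iseqv := ⟨fun _ => .refl _, .symm, .trans⟩

/-- Equivalence classes of reduced words: the normal forms of the elements of the Artin group. -/
def ReducedClass (P : DihedralSystem I) : Type _ := Quotient P.reducedSetoid

/-- The class of a reduced word. -/
def Reduced.toClass (hr : P.Reduced w) : P.ReducedClass := Quotient.mk _ ⟨w, hr⟩

theorem Reduced.toClass_eq_iff (hr : P.Reduced w) (hr' : P.Reduced w') :
    hr.toClass = hr'.toClass ↔ P.WordEquiv w w' :=
  Quotient.eq (r := P.reducedSetoid)

open Classical in
/-- The class of the reduced word obtained from `w` by prepending or cancelling the letter `a`. -/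
noncomputable def Reduced.prepend (a : I × Bool) (hr : P.Reduced w) : P.ReducedClass :=
  if h : P.StartsWith w (letterInv a) then (hr.of_equiv h.choose_spec).1.toClass
  else Reduced.toClass (w := a :: w) ⟨hr, h⟩

theorem Reduced.prepend_of_equiv (hr : P.Reduced w) (hww' : P.WordEquiv w (letterInv a :: w')) :
    hr.prepend a = (hr.of_equiv hww').1.toClass := by
  have h : P.StartsWith w (letterInv a) := ⟨w', hww'⟩
  rw [prepend, dif_pos h, toClass_eq_iff]
  exact (hr.of_equiv h.choose_spec).equiv_of_cons (h.choose_spec.symm.trans hww')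

theorem Reduced.prepend_of_reduced_cons (hr : P.Reduced (a :: w)) :
    hr.1.prepend a = hr.toClass :=
  dif_neg hr.2

theorem Reduced.prepend_congr (hr : P.Reduced w) (hr' : P.Reduced w') (hww' : P.WordEquiv w w') :
    hr.prepend a = hr'.prepend a := by
  by_cases h : P.StartsWith w (letterInv a)
  · obtain ⟨v, hv⟩ := h
    rw [hr.prepend_of_equiv hv, hr'.prepend_of_equiv (hww'.symm.trans hv)]
  · have hcons : P.Reduced (a :: w) := ⟨hr, h⟩
    have hcons' : P.Reduced (a :: w') := ⟨hr', mt hww'.startsWith_iff.2 h⟩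
    rw [hcons.prepend_of_reduced_cons, hcons'.prepend_of_reduced_cons, toClass_eq_iff]
    exact .cons a hww'

/-- Multiplication of classes by a letter on the left. -/
noncomputable def letterAct (a : I × Bool) : P.ReducedClass → P.ReducedClass :=
  Quotient.lift (fun w => w.2.prepend a) fun w w' => w.2.prepend_congr w'.2

theorem letterAct_toClass (a : I × Bool) (hr : P.Reduced w) :
    letterAct a hr.toClass = hr.prepend a := rfl

theorem letterAct_letterInv_letterAct (a : I × Bool) (c : P.ReducedClass) :
    letterAct (letterInv a) (letterAct a c) = c := by
  induction c using Quotient.inductionOn with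
  | h w =>
    obtain ⟨w, hr⟩ := w
    change letterAct (letterInv a) (hr.prepend a) = hr.toClass
    by_cases h : P.StartsWith w (letterInv a)
    · obtain ⟨v, hv⟩ := h
      rw [hr.prepend_of_equiv hv, letterAct_toClass,
        Reduced.prepend_of_reduced_cons (hr.of_equiv hv), Reduced.toClass_eq_iff]
      exact hv.symm
    · have hr' : P.Reduced (a :: w) := ⟨hr, h⟩
      rw [hr'.prepend_of_reduced_cons, letterAct_toClass,
        hr'.prepend_of_equiv (w' := w) (by rw [letterInv_letterInv]; exact .refl _)]

/-- The permutation of the classes given by the generator `i`. -/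
noncomputable def genPerm (P : DihedralSystem I) (i : I) : Equiv.Perm P.ReducedClass where
  toFun := letterAct (i, true)
  invFun := letterAct (i, false)
  left_inv := letterAct_letterInv_letterAct (i, true)
  right_inv := letterAct_letterInv_letterAct (i, false)

theorem letterVal_genPerm (a : I × Bool) (c : P.ReducedClass) :
    letterVal P.genPerm a c = letterAct a c := by
  rcases a with ⟨i, _ | _⟩ <;> rfl

theorem wordVal_genPerm_nil_toClass (hr : P.Reduced w) :
    wordVal P.genPerm w (Reduced.toClass (w := []) trivial) = hr.toClass := by
  induction w with
  | nil => rfl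
  | cons a w ih =>
    rw [wordVal_cons, Equiv.Perm.mul_apply, ih hr.1, letterVal_genPerm, letterAct_toClass,
      hr.prepend_of_reduced_cons]

theorem Reduced.exists_prepend_eq (ha : a.1 ∈ s) (hr : P.Reduced w) (hw : P.Splits s w h w₀) :
    ∃ w', ∃ hr' : P.Reduced w',
      hr.prepend a = hr'.toClass ∧ P.Splits s w' (letterVal (P.gen s) a * h) w₀ := by
  have hsingle {b : I × Bool} (hb : b.1 ∈ s) : ∀ x ∈ [b], x.1 ∈ s := by simpa using hb
  by_cases hstart : P.StartsWith w (letterInv a)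
  · obtain ⟨v, hv⟩ := hstart
    obtain ⟨k, rfl, hk⟩ := hr.exists_splits_of_equiv_append (p := [letterInv a]) hw hv (hsingle ha)
    exact ⟨v, _, hr.prepend_of_equiv hv, by simpa using hk⟩
  · have hr' : P.Reduced (a :: w) := ⟨hr, hstart⟩
    exact ⟨_, hr', hr'.prepend_of_reduced_cons,
      by simpa using hr'.splits_append (p := [a]) (hsingle ha) hw⟩

theorem Reduced.exists_wordVal_genPerm_eq (hu : ∀ x ∈ u, x.1 ∈ s) (hr : P.Reduced w)
    (hw : P.Splits s w h w₀) : ∃ w', ∃ hr' : P.Reduced w',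
      wordVal P.genPerm u hr.toClass = hr'.toClass ∧
        P.Splits s w' (wordVal (P.gen s) u * h) w₀ := by
  induction u with
  | nil => exact ⟨w, hr, rfl, by simpa using hw⟩
  | cons a u ih =>
    rw [List.forall_mem_cons] at hu
    obtain ⟨w', hr', heq, hw'⟩ := ih hu.2
    obtain ⟨w'', hr'', heq', hw''⟩ := hr'.exists_prepend_eq hu.1 hw'
    refine ⟨w'', hr'', ?_, by rwa [wordVal_cons, mul_assoc]⟩
    rw [wordVal_cons, Equiv.Perm.mul_apply, heq, letterVal_genPerm, letterAct_toClass, heq']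

theorem respects_genPerm (P : DihedralSystem I) (s : Sym2 I) :
    Respects (s : Set I) (P.gen s) P.genPerm := by
  intro u v hu hv heq
  ext c
  induction c using Quotient.inductionOn with
  | h w =>
    obtain ⟨w, hr⟩ := w
    change wordVal P.genPerm u hr.toClass = wordVal P.genPerm v hr.toClass
    obtain ⟨h, w₀, hw⟩ := hr.exists_splits s
    obtain ⟨w₁, hr₁, h₁, hw₁⟩ := hr.exists_wordVal_genPerm_eq hu hw
    obtain ⟨w₂, hr₂, h₂, hw₂⟩ := hr.exists_wordVal_genPerm_eq hv hw
    rw [h₁, h₂, Reduced.toClass_eq_iff]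
    exact (heq ▸ hw₁).equiv hw₂

end Action

end DihedralSystem

/-! ### Word length -/

section LetterLength

variable {I G : Type*} [Group G] {x : I → G} {g h : G}

/-- The word length with respect to the values of `x` and their inverses. -/
noncomputable def letterLength (x : I → G) : G → ℕ := wordLength (Set.range (letterVal x))

theorem letterLength_wordVal_le (x : I → G) (w : List (I × Bool)) :
    letterLength x (wordVal x w) ≤ w.length :=
  Nat.sInf_le ⟨w.map (letterVal x), List.forall_mem_map.2 fun a _ => Set.mem_range_self a,
    List.length_map _, rfl⟩

theorem exists_wordVal_eq_length_eq (hx : ∀ g, ∃ w, wordVal x w = g) (g : G) :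
    ∃ w, wordVal x w = g ∧ w.length = letterLength x g := by
  obtain ⟨w, hw⟩ := hx g
  obtain ⟨l, hl, hlen, rfl⟩ : letterLength x g ∈ {N | ∃ l : List G,
      (∀ a ∈ l, a ∈ Set.range (letterVal x)) ∧ l.length = N ∧ l.prod = g} :=
    Nat.sInf_mem ⟨_, w.map (letterVal x),
      List.forall_mem_map.2 fun a _ => Set.mem_range_self a, rfl, hw⟩
  obtain ⟨w', rfl⟩ : l ∈ Set.range (List.map (letterVal x)) := by rwa [Set.range_list_map]
  exact ⟨w', rfl, by rw [← hlen, List.length_map]⟩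

theorem letterLength_eq_zero_iff (hx : ∀ g, ∃ w, wordVal x w = g) :
    letterLength x g = 0 ↔ g = 1 := by
  constructor
  · intro h0
    obtain ⟨w, rfl, hw⟩ := exists_wordVal_eq_length_eq hx g
    rw [h0, List.length_eq_zero_iff] at hw
    rw [hw, wordVal_nil]
  · rintro rfl
    exact Nat.le_zero.1 (letterLength_wordVal_le x [])

theorem letterLength_mul_le (hx : ∀ g, ∃ w, wordVal x w = g) (g h : G) :
    letterLength x (g * h) ≤ letterLength x g + letterLength x h := by
  obtain ⟨u, rfl, hu⟩ := exists_wordVal_eq_length_eq hx g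
  obtain ⟨v, rfl, hv⟩ := exists_wordVal_eq_length_eq hx h
  rw [← hu, ← hv, ← wordVal_append, ← List.length_append]
  exact letterLength_wordVal_le x _

theorem letterLength_inv (hx : ∀ g, ∃ w, wordVal x w = g) (g : G) :
    letterLength x g⁻¹ = letterLength x g := by
  have hle (g : G) : letterLength x g⁻¹ ≤ letterLength x g := by
    obtain ⟨w, rfl, hw⟩ := exists_wordVal_eq_length_eq hx g
    rw [← wordVal_invRev, ← hw, ← FreeGroup.invRev_length (L₁ := w)]
    exact letterLength_wordVal_le x _
  exact (hle g).antisymm (by simpa using hle g⁻¹)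

theorem isLeftDiv_of_wordVal_append (hx : ∀ g, ∃ w, wordVal x w = g) {u v : List (I × Bool)}
    (huv : letterLength x (wordVal x (u ++ v)) = (u ++ v).length) :
    letterLength x (wordVal x u) = u.length ∧
      IsLeftDiv (letterLength x) (wordVal x u) (wordVal x (u ++ v)) := by
  have hu := letterLength_wordVal_le x u
  have hv := letterLength_wordVal_le x v
  have hmul := letterLength_mul_le hx (wordVal x u) (wordVal x v)
  rw [List.length_append, wordVal_append] at huv
  refine ⟨by omega, ?_⟩
  rw [IsLeftDiv, wordVal_append, inv_mul_cancel_left]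
  omega

theorem exists_wordVal_append_eq_of_isLeftDiv (hx : ∀ g, ∃ w, wordVal x w = g)
    (hdiv : IsLeftDiv (letterLength x) h g) {u : List (I × Bool)} (hu : wordVal x u = h)
    (hlen : letterLength x h = u.length) :
    ∃ v, wordVal x (u ++ v) = g ∧ letterLength x g = (u ++ v).length := by
  obtain ⟨v, hv, hvlen⟩ := exists_wordVal_eq_length_eq hx (h⁻¹ * g)
  refine ⟨v, by rw [wordVal_append, hu, hv, mul_inv_cancel_left], ?_⟩
  rw [← hdiv, hlen, ← hvlen, List.length_append]

theorem mem_closure_image_iff_exists_wordVal {S : Set I} : h ∈ Subgroup.closure (x '' S) ↔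
    ∃ u : List (I × Bool), (∀ y ∈ u, y.1 ∈ S) ∧ wordVal x u = h := by
  constructor
  · intro hh
    induction hh using Subgroup.closure_induction with
    | mem g hg =>
      obtain ⟨i, hi, rfl⟩ := hg
      exact ⟨[(i, true)], by simpa using hi, by simp [letterVal]⟩
    | one => exact ⟨[], by simp, rfl⟩
    | mul g h _ _ hg hh =>
      obtain ⟨u, hu, rfl⟩ := hg
      obtain ⟨v, hv, rfl⟩ := hh
      exact ⟨u ++ v, List.forall_mem_append.2 ⟨hu, hv⟩, wordVal_append x u v⟩
    | inv g _ hg =>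
      obtain ⟨u, hu, rfl⟩ := hg
      refine ⟨FreeGroup.invRev u, fun y hy => ?_, wordVal_invRev x u⟩
      obtain ⟨z, hz, rfl⟩ := List.mem_map.1 (List.mem_reverse.1 hy)
      exact hu z hz
  · rintro ⟨u, hu, rfl⟩
    refine Subgroup.list_prod_mem _ fun g hg => ?_
    obtain ⟨⟨i, b⟩, hy, rfl⟩ := List.mem_map.1 hg
    have hmem : x i ∈ Subgroup.closure (x '' S) :=
      Subgroup.subset_closure (Set.mem_image_of_mem x (hu _ hy))
    cases b
    · exact inv_mem hmem
    · exact hmem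

end LetterLength

/-! ### Greatest divisors -/

/-- `h` is the greatest element of `H` dividing `g` on the left, for the order by divisibility. -/
def IsGreatestLeftDiv {G : Type*} [Group G] (ℓ : G → ℕ) (H : Subgroup G) (h g : G) : Prop :=
  h ∈ H ∧ IsLeftDiv ℓ h g ∧ ∀ h' ∈ H, IsLeftDiv ℓ h' g → IsLeftDiv ℓ h' h

theorem IsGreatestLeftDiv.eq_of_letterLength_le {I G : Type*} [Group G] {x : I → G}
    (hx : ∀ g, ∃ w, wordVal x w = g) {H : Subgroup G} {g h h' : G}
    (hh : IsGreatestLeftDiv (letterLength x) H h g) (hmem : h' ∈ H)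
    (hdiv : IsLeftDiv (letterLength x) h' g) (hle : letterLength x h ≤ letterLength x h') :
    h' = h := by
  have hdiv' := hh.2.2 h' hmem hdiv
  rw [IsLeftDiv] at hdiv'
  exact inv_mul_eq_one.1 ((letterLength_eq_zero_iff hx).1 (by omega))

universe u

/-- The group `G` generated by the elements `x i` is presented by the relations of the groups of
`P`: it is the sum of these groups amalgamated along the cyclic subgroups of the generators. -/
structure IsAmalgam {I : Type u} (P : DihedralSystem I) {G : Type*} [Group G] (x : I → G) :
    Prop where
  respects : ∀ s : Sym2 I, Respects (s : Set I) (P.gen s) x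
  exists_wordVal_eq : ∀ g, ∃ w, wordVal x w = g
  exists_hom : ∀ {H : Type u} [Group H] (y : I → H),
    (∀ s : Sym2 I, Respects (s : Set I) (P.gen s) y) → ∃ φ : G →* H, φ ∘ x = y

namespace IsAmalgam

variable {I G : Type*} [Group G] {P : DihedralSystem I} {x : I → G} {s : Sym2 I}
  {u v w w' w₀ : List (I × Bool)} {g h : G}

theorem wordVal_eq_of_equiv (hP : IsAmalgam P x) (hww' : P.WordEquiv w w') :
    wordVal x w = wordVal x w' := by
  induction hww' with
  | refl => rfl
  | exchange w hu hv heq =>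
    rw [wordVal_append, wordVal_append, hP.respects _ hu.1 hv.1 heq]
  | cons a _ ih => rw [wordVal_cons, wordVal_cons, ih]
  | trans _ _ ih ih' => exact ih.trans ih'

theorem equiv_of_wordVal_eq (hP : IsAmalgam P x) (hr : P.Reduced w) (hr' : P.Reduced w')
    (heq : wordVal x w = wordVal x w') : P.WordEquiv w w' := by
  obtain ⟨φ, hφ⟩ := hP.exists_hom P.genPerm P.respects_genPerm
  rw [← hr.toClass_eq_iff hr', ← DihedralSystem.wordVal_genPerm_nil_toClass,
    ← DihedralSystem.wordVal_genPerm_nil_toClass hr', ← hφ, ← map_wordVal, ← map_wordVal, heq]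

theorem exists_reduced (hP : IsAmalgam P x) (w : List (I × Bool)) :
    ∃ v, P.Reduced v ∧ v.length ≤ w.length ∧ wordVal x v = wordVal x w := by
  induction w with
  | nil => exact ⟨[], trivial, le_rfl, rfl⟩
  | cons a w ih =>
    obtain ⟨v, hr, hlen, heq⟩ := ih
    by_cases h : P.StartsWith v (letterInv a)
    · obtain ⟨v', hv⟩ := h
      refine ⟨v', (hr.of_equiv hv).1, ?_, ?_⟩
      · have := hv.length_eq
        rw [List.length_cons] at this ⊢
        omega
      · rw [wordVal_cons, ← heq, hP.wordVal_eq_of_equiv hv, wordVal_cons, letterVal_letterInv,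
          mul_inv_cancel_left]
    · exact ⟨a :: v, ⟨hr, h⟩, Nat.succ_le_succ hlen, by rw [wordVal_cons, wordVal_cons, heq]⟩

theorem letterLength_of_reduced (hP : IsAmalgam P x) (hr : P.Reduced w) :
    letterLength x (wordVal x w) = w.length := by
  obtain ⟨u, hu, hlen⟩ := exists_wordVal_eq_length_eq hP.exists_wordVal_eq (wordVal x w)
  obtain ⟨v, hv, hle, heq⟩ := hP.exists_reduced u
  have := (hP.equiv_of_wordVal_eq hr hv (hu.symm.trans heq.symm)).length_eq
  have := letterLength_wordVal_le x w
  omega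

theorem reduced_of_letterLength (hP : IsAmalgam P x)
    (hw : letterLength x (wordVal x w) = w.length) : P.Reduced w := by
  induction w with
  | nil => trivial
  | cons a w ih =>
    have hcons := letterLength_mul_le hP.exists_wordVal_eq (letterVal x a) (wordVal x w)
    have ha : letterLength x (letterVal x a) ≤ 1 := by
      simpa using letterLength_wordVal_le x [a]
    have hle := letterLength_wordVal_le x w
    rw [← wordVal_cons, hw, List.length_cons] at hcons
    refine ⟨ih (by omega), fun ⟨v, hv⟩ => ?_⟩
    rw [wordVal_cons, hP.wordVal_eq_of_equiv hv, wordVal_cons, letterVal_letterInv,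
      mul_inv_cancel_left] at hw
    have hle' := letterLength_wordVal_le x v
    have hlen := hv.length_eq
    rw [List.length_cons] at hw hlen
    omega

theorem isLeftDiv_of_reduced_append (hP : IsAmalgam P x) (hr : P.Reduced (u ++ v)) :
    IsLeftDiv (letterLength x) (wordVal x u) (wordVal x (u ++ v)) :=
  (isLeftDiv_of_wordVal_append hP.exists_wordVal_eq (hP.letterLength_of_reduced hr)).2

theorem reduced_left_of_append (hP : IsAmalgam P x) (hr : P.Reduced (u ++ v)) : P.Reduced u :=
  hP.reduced_of_letterLength
    (isLeftDiv_of_wordVal_append hP.exists_wordVal_eq (hP.letterLength_of_reduced hr)).1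

theorem letterLength_of_geodesic (hP : IsAmalgam P x) (hu : P.Geodesic s u) :
    letterLength x (wordVal x u) = u.length := by
  refine hP.letterLength_of_reduced ?_
  have hr := (P.regularUpTo u.length).reduced_geodesic_append (w₀ := []) trivial
    (fun y _ ⟨v, hv⟩ => absurd hv.length_eq (Nat.zero_ne_add_one _)) hu (by simp)
  rwa [List.append_nil] at hr

theorem isGreatestLeftDiv_of_splits (hP : IsAmalgam P x) (hr : P.Reduced w)
    (hu : P.Geodesic s u) (hw : P.Splits s w (wordVal (P.gen s) u) w₀) :
    IsGreatestLeftDiv (letterLength x) (Subgroup.closure (x '' s)) (wordVal x u)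
      (wordVal x w) := by
  have hequiv := hw.equiv_append hu rfl
  refine ⟨mem_closure_image_iff_exists_wordVal.2 ⟨u, hu.1, rfl⟩, ?_, fun h' hmem hdiv => ?_⟩
  · rw [hP.wordVal_eq_of_equiv hequiv]
    exact hP.isLeftDiv_of_reduced_append (hr.of_equiv hequiv)
  obtain ⟨q, hq, rfl⟩ := mem_closure_image_iff_exists_wordVal.1 hmem
  obtain ⟨p, hp, heq⟩ := DihedralSystem.exists_geodesic (wordVal (P.gen s) q)
  obtain ⟨v, hv, hlen⟩ := exists_wordVal_append_eq_of_isLeftDiv hP.exists_wordVal_eq hdiv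
    (hP.respects s hp.1 hq heq)
    (by rw [← hP.respects s hp.1 hq heq, hP.letterLength_of_geodesic hp])
  have hpv : P.Reduced (p ++ v) := hP.reduced_of_letterLength (hv ▸ hlen)
  obtain ⟨k, hk, hsplit⟩ := hr.exists_splits_of_equiv_append hw
    (hP.equiv_of_wordVal_eq hr hpv hv.symm) hp.1
  obtain ⟨u', hu', rfl, hvu', -⟩ := hsplit
  rw [← hP.respects s hp.1 hq heq, hP.respects s (u := u) (v := p ++ u') hu.1
    (List.forall_mem_append.2 ⟨hp.1, hu'.1⟩) (by rw [hk, wordVal_append])]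
  have hr' := hpv.of_equiv (hvu'.append_left p)
  rw [← List.append_assoc] at hr'
  exact hP.isLeftDiv_of_reduced_append (hP.reduced_left_of_append hr')

theorem exists_isGreatestLeftDiv (hP : IsAmalgam P x) (s : Sym2 I) (g : G) :
    ∃ h, IsGreatestLeftDiv (letterLength x) (Subgroup.closure (x '' s)) h g := by
  obtain ⟨w, rfl, hlen⟩ := exists_wordVal_eq_length_eq hP.exists_wordVal_eq g
  have hr := hP.reduced_of_letterLength hlen.symm
  obtain ⟨_, _, hw⟩ := hr.exists_splits s
  obtain ⟨u, hu, rfl, -⟩ := id hw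
  exact ⟨_, hP.isGreatestLeftDiv_of_splits hr hu hw⟩

theorem exists_isGreatestLeftDiv_eq_mul_pow (hP : IsAmalgam P x)
    (hlen : letterLength x (wordVal x (u ++ v)) = (u ++ v).length) (hu : ∀ y ∈ u, y.1 ∈ s)
    (hv : ∀ c ∈ v.head?, c.1 ∉ s) : ∃ a : I × Bool, a.1 ∈ s ∧ ∃ r : ℕ,
      IsGreatestLeftDiv (letterLength x) (Subgroup.closure (x '' s))
        (wordVal x u * letterVal x a ^ r) (wordVal x (u ++ v)) ∧
      letterLength x (wordVal x u * letterVal x a ^ r) = letterLength x (wordVal x u) + r := by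
  have hr := hP.reduced_of_letterLength hlen
  obtain ⟨a, ha, r, v₀, hgeo, hsplit⟩ := hr.of_append_right.exists_splits_replicate hv
  have hur : P.Geodesic s (u ++ List.replicate r a) :=
    (P.regularUpTo _).geodesic_append le_rfl hr hu hgeo (hsplit.equiv_append hgeo rfl)
  have huv := hr.splits_append hu hsplit
  rw [← wordVal_append] at huv
  refine ⟨a, ha, r, ?_⟩
  rw [← wordVal_replicate, ← wordVal_append]
  refine ⟨hP.isGreatestLeftDiv_of_splits hr hur huv, ?_⟩
  rw [hP.letterLength_of_geodesic hur, hP.letterLength_of_geodesic hur.left_of_append,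
    List.length_append, List.length_replicate]

end IsAmalgam

/-! ### Free groups -/

section Free

variable {α : Type*}

theorem wordVal_of (w : List (α × Bool)) : wordVal FreeGroup.of w = FreeGroup.mk w := by
  rw [wordVal_eq_lift, FreeGroup.lift_of_eq_id, MonoidHom.id_apply]

theorem isReduced_replicate_append_replicate {x z : α × Bool} (hxz : x.1 ≠ z.1) (t r : ℕ) :
    FreeGroup.IsReduced (List.replicate t z ++ List.replicate r x) := by
  have hreplicate (k : ℕ) (y : α × Bool) : FreeGroup.IsReduced (List.replicate k y) :=
    List.isChain_replicate_of_rel k fun _ => rfl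
  refine List.isChain_append.2 ⟨hreplicate t z, hreplicate r x, fun a ha b hb hab => ?_⟩
  rw [List.eq_of_mem_replicate (List.mem_of_getLast? ha),
    List.eq_of_mem_replicate (List.mem_of_head? hb)] at hab
  exact absurd hab.symm hxz

theorem isReduced_cons_or_eq_cons {w : List (α × Bool)} (hw : FreeGroup.IsReduced w)
    (x : α × Bool) : FreeGroup.IsReduced (x :: w) ∨ ∃ v, w = letterInv x :: v := by
  obtain _ | ⟨y, v⟩ := w
  · exact .inl .singleton
  by_cases h : x.1 = y.1 → x.2 = y.2
  · exact .inl (FreeGroup.isReduced_cons_cons.2 ⟨h, hw⟩)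
  · rw [Classical.not_imp] at h
    exact .inr ⟨v, congrArg (· :: v) (Prod.ext h.1.symm (Bool.eq_not.2 (Ne.symm h.2)))⟩

theorem exists_isReduced_wordVal_of_eq (h : FreeGroup α) :
    ∃ w, FreeGroup.IsReduced w ∧ wordVal FreeGroup.of w = h := by
  classical
  exact ⟨h.toWord, FreeGroup.isReduced_toWord, (wordVal_of _).trans FreeGroup.mk_toWord⟩

variable [DecidableEq α]

theorem norm_wordVal_of {w : List (α × Bool)} (hw : FreeGroup.IsReduced w) :
    (wordVal FreeGroup.of w).norm = w.length := by
  rw [wordVal_of, FreeGroup.norm, FreeGroup.toWord_mk, hw.reduce_eq]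

theorem isLargeDihedralLength_norm :
    IsLargeDihedralLength (Set.univ : Set α) FreeGroup.of FreeGroup.norm where
  map_one := FreeGroup.norm_one
  eq_one_of_eq_zero _ := FreeGroup.norm_eq_zero.1
  step x h _ := by
    obtain ⟨w, hw, rfl⟩ := exists_isReduced_wordVal_of_eq h
    obtain hcons | ⟨v, rfl⟩ := isReduced_cons_or_eq_cons hw x
    · left
      rw [← wordVal_cons, norm_wordVal_of hcons, norm_wordVal_of hw, List.length_cons]
    · right
      have hv : FreeGroup.IsReduced v := hw.tail
      rw [norm_wordVal_of hw, wordVal_cons, letterVal_letterInv, mul_inv_cancel_left,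
        norm_wordVal_of hv, List.length_cons]
  exists_descent h hh := by
    obtain ⟨w, hw, rfl⟩ := exists_isReduced_wordVal_of_eq h
    rw [norm_wordVal_of hw] at hh ⊢
    obtain ⟨y, v, rfl⟩ := List.exists_cons_of_length_pos (Nat.pos_of_ne_zero hh)
    have hv : FreeGroup.IsReduced v := hw.tail
    refine ⟨letterInv y, Set.mem_univ _, ?_⟩
    rw [wordVal_cons, letterVal_letterInv, inv_mul_cancel_left, norm_wordVal_of hv,
      List.length_cons]
  lt_inv_mul_of_mul_lt x h _ hlt := by
    obtain ⟨w, hw, rfl⟩ := exists_isReduced_wordVal_of_eq h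
    obtain hcons | ⟨v, rfl⟩ := isReduced_cons_or_eq_cons hw x
    · rw [← wordVal_cons, norm_wordVal_of hcons, norm_wordVal_of hw, List.length_cons] at hlt
      omega
    · have hcons : FreeGroup.IsReduced (letterInv x :: letterInv x :: v) :=
        FreeGroup.isReduced_cons_cons.2 ⟨fun _ => rfl, hw⟩
      rw [← letterVal_letterInv, ← wordVal_cons, norm_wordVal_of hcons, norm_wordVal_of hw]
      exact Nat.lt_succ_self _
  lt_mul_pow_mul_pow x x' z _ _ hxz hx' t r ht := by
    obtain ⟨t, rfl⟩ := Nat.exists_eq_add_of_le' ht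
    have hw := isReduced_replicate_append_replicate (hx'.trans_ne hxz) (t + 1) r
    have hcons : FreeGroup.IsReduced (x :: (List.replicate (t + 1) z ++ List.replicate r x')) :=
      FreeGroup.isReduced_cons_cons.2 ⟨fun h => absurd h hxz, hw⟩
    rw [← wordVal_replicate, ← wordVal_replicate, ← wordVal_append, ← wordVal_cons,
      norm_wordVal_of hcons, norm_wordVal_of hw]
    exact Nat.lt_succ_self _

end Free

/-! ### Alternating words in two letters -/

section Alternating

variable {G H : Type*} [Monoid G] [Monoid H]

theorem map_altProd (φ : G →* H) (j : ℕ) (x x' : G) :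
    φ (altProd j x x') = altProd j (φ x) (φ x') := by
  induction j generalizing x x' with
  | zero => exact map_one φ
  | succ j ih => rw [altProd, map_mul, ih, altProd]

/-- The letter in position `j`, counted from `0`, of the alternating word beginning with `a`. -/
def altLetter (a : Bool) (j : ℕ) : Bool := a ^^ j.bodd

/-- The value of the alternating word of length `j` beginning with the letter `a`. -/
def alt (y : Bool → H) (a : Bool) (j : ℕ) : H := altProd j (y a) (y !a)

@[simp] theorem altLetter_zero (a : Bool) : altLetter a 0 = a := by simp [altLetter]

theorem altLetter_succ (a : Bool) (j : ℕ) : altLetter a (j + 1) = !altLetter a j := by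
  simp [altLetter]

theorem altLetter_not (a : Bool) (j : ℕ) : altLetter (!a) j = !altLetter a j := by
  simp [altLetter]

theorem altLetter_altLetter (a : Bool) (i j : ℕ) :
    altLetter (altLetter a i) j = altLetter a (i + j) := by
  simp [altLetter, Nat.bodd_add]

theorem altLetter_add_self (a : Bool) (j : ℕ) : altLetter a (j + j) = a := by
  simp [altLetter, Nat.bodd_add]

theorem map_alt (φ : G →* H) (y : Bool → G) (a : Bool) (j : ℕ) :
    φ (alt y a j) = alt (φ ∘ y) a j :=
  map_altProd φ j _ _

@[simp] theorem alt_zero (y : Bool → H) (a : Bool) : alt y a 0 = 1 := rfl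

theorem alt_succ (y : Bool → H) (a : Bool) (j : ℕ) : alt y a (j + 1) = y a * alt y (!a) j := by
  rw [alt, alt, Bool.not_not, altProd]

@[simp] theorem alt_one (y : Bool → H) (a : Bool) : alt y a 1 = y a := by
  rw [alt_succ, alt_zero, mul_one]

theorem alt_add (y : Bool → H) (a : Bool) (i j : ℕ) :
    alt y a (i + j) = alt y a i * alt y (altLetter a i) j := by
  induction i generalizing a with
  | zero => simp
  | succ i ih =>
    rw [Nat.succ_add, alt_succ, ih, alt_succ, mul_assoc, altLetter_not, altLetter_succ]

theorem alt_succ' (y : Bool → H) (a : Bool) (j : ℕ) :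
    alt y a (j + 1) = alt y a j * y (altLetter a j) := by
  rw [alt_add, alt_one]

end Alternating

/-! ### Normal forms in two-generator Artin groups -/

/-- The Garside normal forms `P₁ ⋯ Pₖ Δ ^ e` of the two-generator Artin group with exponent
`K + 3`, where each `Pᵢ` is an alternating positive word of length between `1` and `K + 2`, and
begins with the last letter of `Pᵢ₋₁`. The pair `(e, some (a, c, l))` encodes the first letter `a`
of `P₁` and the lengths of the `Pᵢ` diminished by one, and `(e, none)` encodes `Δ ^ e`. -/
abbrev NormalForm (K : ℕ) := ℤ × Option (Bool × Fin (K + 2) × List (Fin (K + 2)))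

namespace NormalForm

variable {K : ℕ}

/-- The product of alternating words beginning with `a`, in the encoding of `NormalForm`. -/
def ofFactors (a : Bool) : List (Fin (K + 2)) → Option (Bool × Fin (K + 2) × List (Fin (K + 2)))
  | [] => none
  | c :: l => some (a, c, l)

/-- Left multiplication by the generator `a`. -/
def genMul (a : Bool) : NormalForm K → NormalForm K
  | (e, none) => (e, some (a, 0, []))
  | (e, some (b, c, l)) =>
    if b = a then (e, some (a, 0, c :: l))
    else if h : c.1 + 1 < K + 2 then (e, some (a, ⟨c.1 + 1, h⟩, l))
    else (e + 1, ofFactors b l)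

/-- Left multiplication by the inverse of the generator `a`. -/
def genInvMul (a : Bool) : NormalForm K → NormalForm K
  | (e, none) => (e - 1, some (!a, Fin.last _, []))
  | (e, some (b, c, l)) =>
    if b = a then
      if c.1 = 0 then (e, ofFactors b l)
      else (e, some (!a, ⟨c.1 - 1, by omega⟩, l))
    else (e - 1, some (b, Fin.last _, c :: l))

@[simp] theorem genMul_ofFactors (a : Bool) (e : ℤ) (l : List (Fin (K + 2))) :
    genMul a (e, ofFactors a l) = (e, some (a, 0, l)) := by
  cases l <;> simp [ofFactors, genMul]

@[simp] theorem genInvMul_ofFactors (a : Bool) (e : ℤ) (l : List (Fin (K + 2))) :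
    genInvMul a (e, ofFactors (!a) l) = (e - 1, some (!a, Fin.last _, l)) := by
  cases l <;> simp [ofFactors, genInvMul]

theorem genMul_genInvMul (a : Bool) (σ : NormalForm K) : genMul a (genInvMul a σ) = σ := by
  obtain ⟨e, _ | ⟨b, c, l⟩⟩ := σ
  · simp [genInvMul, genMul, ofFactors]
  obtain rfl | rfl := Bool.eq_or_eq_not b a
  · by_cases hc : c.1 = 0
    · obtain rfl : c = 0 := Fin.ext hc
      simp [genInvMul]
    · have hpred : c.1 - 1 + 1 = c.1 := by omega
      simp [genInvMul, genMul, hc, hpred]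
  · simp [genInvMul, genMul, ofFactors]

theorem genInvMul_genMul (a : Bool) (σ : NormalForm K) : genInvMul a (genMul a σ) = σ := by
  obtain ⟨e, _ | ⟨b, c, l⟩⟩ := σ
  · simp [genInvMul, genMul, ofFactors]
  obtain rfl | rfl := Bool.eq_or_eq_not b a
  · simp [genInvMul, genMul, ofFactors]
  · by_cases hc : c.1 + 1 < K + 2
    · simp [genInvMul, genMul, hc]
    · obtain rfl : c = Fin.last _ := Fin.ext (by rw [Fin.val_last]; omega)
      simp [genMul]

/-- The permutation of the normal forms given by the generator `a`. -/
def genPerm (a : Bool) : Equiv.Perm (NormalForm K) where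
  toFun := genMul a
  invFun := genInvMul a
  left_inv := genInvMul_genMul a
  right_inv := genMul_genInvMul a

theorem genPerm_apply (a : Bool) (σ : NormalForm K) : genPerm a σ = genMul a σ := rfl

theorem genPerm_inv_apply (a : Bool) (σ : NormalForm K) : (genPerm a)⁻¹ σ = genInvMul a σ := rfl

theorem letterVal_genPerm_true (a : Bool) (σ : NormalForm K) :
    letterVal genPerm (a, true) σ = genMul a σ := rfl

theorem letterVal_genPerm_false (a : Bool) (σ : NormalForm K) :
    letterVal genPerm (a, false) σ = genInvMul a σ := rfl

theorem alt_genPerm_apply (a : Bool) (e : ℤ) (c : Fin (K + 2)) (l : List (Fin (K + 2))) (j : ℕ)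
    (h : c.1 + j < K + 2) :
    alt genPerm a j (e, some (altLetter a j, c, l)) = (e, some (a, ⟨c.1 + j, h⟩, l)) := by
  induction j generalizing a with
  | zero => simp
  | succ j ih =>
    rw [alt_succ, Equiv.Perm.mul_apply, altLetter_succ, ← altLetter_not, ih _ (by omega),
      genPerm_apply]
    simp [genMul, h, add_assoc]

theorem alt_genPerm_apply_last (a : Bool) (e : ℤ) (c : Fin (K + 2)) (l : List (Fin (K + 2)))
    (j : ℕ) (h : c.1 + j = K + 2) :
    alt genPerm a j (e, some (altLetter a j, c, l)) = (e + 1, ofFactors (!a) l) := by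
  obtain ⟨j, rfl⟩ : ∃ i, j = i + 1 := ⟨j - 1, by omega⟩
  rw [alt_succ, Equiv.Perm.mul_apply, altLetter_succ, ← altLetter_not,
    alt_genPerm_apply _ _ _ _ _ (by omega), genPerm_apply]
  have hlast : ¬ c.1 + j + 1 < K + 2 := by omega
  simp [genMul, hlast]

/-- Left multiplication by `Δ`: moving `Δ` to the right exchanges the generators if the exponent
`K + 3` is odd. -/
def garsideMul : NormalForm K → NormalForm K
  | (e, t) => (e + 1, t.map (Prod.map (altLetter · (K + 3)) id))

theorem alt_genPerm (a : Bool) (σ : NormalForm K) :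
    alt genPerm a (K + 3) σ = garsideMul σ := by
  obtain ⟨e, _ | ⟨b, c, l⟩⟩ := σ
  · rw [alt_succ', Equiv.Perm.mul_apply, genPerm_apply, genMul,
      alt_genPerm_apply_last _ _ _ _ _ (by simp)]
    rfl
  obtain rfl | rfl := Bool.eq_or_eq_not b (altLetter a (K + 2))
  · have hb : altLetter (altLetter a (K + 2)) (K + 3) = !a := by
      rw [altLetter_altLetter, ← add_assoc (K + 2) (K + 2) 1, altLetter_succ, altLetter_add_self]
    rw [alt_succ', Equiv.Perm.mul_apply, genPerm_apply, genMul, if_pos rfl,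
      alt_genPerm_apply_last _ _ _ _ _ (by simp)]
    simp [garsideMul, ofFactors, hb]
  · have hK : K + 3 = c.1 + 1 + (K + 2 - c.1) := by omega
    have hb : (!altLetter a (K + 2)) = altLetter (altLetter a (c.1 + 1)) (K + 2 - c.1) := by
      rw [← altLetter_succ, altLetter_altLetter, ← hK]
    have ha : altLetter (!altLetter a (K + 2)) (K + 3) = a := by
      rw [← altLetter_succ, altLetter_altLetter, altLetter_add_self]
    have hcancel : c.1 + (K + 2 - c.1) = K + 2 := by omega
    simp only [garsideMul, Option.map_some, Prod.map_apply, ha, id]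
    rw [hK, alt_add, Equiv.Perm.mul_apply, hb, alt_genPerm_apply_last _ _ _ _ _ hcancel,
      alt_succ', Equiv.Perm.mul_apply, altLetter_succ, Bool.not_not, genPerm_apply,
      genMul_ofFactors, alt_genPerm_apply _ _ _ _ _ (by simp)]
    simp

/-- The lengths, diminished by one, of the alternating factors of a normal form. -/
def factors : NormalForm K → List (Fin (K + 2))
  | (_, none) => []
  | (_, some (_, c, l)) => c :: l

@[simp] theorem factors_ofFactors (e : ℤ) (a : Bool) (l : List (Fin (K + 2))) :
    factors (e, ofFactors a l) = l := by
  cases l <;> rfl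

/-- The exponent of `Δ` plus the number of alternating factors of length greater than `v`. The word
length of a normal form is the sum of the absolute values of these numbers. -/
def count (σ : NormalForm K) (v : ℕ) : ℤ := σ.1 + (factors σ).countP (v ≤ ·.1)

/-- The word length of a normal form. -/
def length (σ : NormalForm K) : ℕ := ∑ v ∈ Finset.range (K + 3), (count σ v).natAbs

/-- The argument at which left multiplication by the generator `a` changes `count`. -/
def genIndex (a : Bool) : NormalForm K → ℕ
  | (_, none) => 0
  | (_, some (b, c, _)) => if b = a then 0 else c.1 + 1

/-- The argument at which left multiplication by the inverse of the generator `a` changes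
`count`. -/
def genInvIndex (a : Bool) : NormalForm K → ℕ
  | (_, none) => K + 2
  | (_, some (b, c, _)) => if b = a then c.1 else K + 2

theorem genIndex_le_genInvIndex (a : Bool) (σ : NormalForm K) :
    genIndex a σ ≤ genInvIndex a σ := by
  obtain ⟨e, _ | ⟨b, c, l⟩⟩ := σ
  · exact Nat.zero_le _
  · simp only [genIndex, genInvIndex]
    split <;> omega

theorem genInvIndex_le (a : Bool) (σ : NormalForm K) : genInvIndex a σ ≤ K + 2 := by
  obtain ⟨e, _ | ⟨b, c, l⟩⟩ := σ
  · exact le_rfl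
  · simp only [genInvIndex]
    split <;> omega

theorem genIndex_genInvMul (a : Bool) (σ : NormalForm K) :
    genIndex a (genInvMul a σ) = genInvIndex a σ := by
  obtain ⟨e, _ | ⟨b, c, l⟩⟩ := σ
  · simp [genIndex, genInvIndex, genInvMul]
  obtain rfl | rfl := Bool.eq_or_eq_not b a
  · by_cases hc : c.1 = 0
    · cases l <;> simp [genIndex, genInvIndex, genInvMul, hc, ofFactors]
    · have hpred : c.1 - 1 + 1 = c.1 := by omega
      simp [genIndex, genInvIndex, genInvMul, hc, hpred]
  · simp [genIndex, genInvIndex, genInvMul]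

theorem count_anti (σ : NormalForm K) : Antitone (count σ) := by
  intro v v' h
  have hmono : (factors σ).countP (v' ≤ ·.1) ≤ (factors σ).countP (v ≤ ·.1) :=
    List.countP_mono_left fun c _ hc => by
      simp only [decide_eq_true_eq] at hc ⊢
      exact h.trans hc
  simpa only [count, add_le_add_iff_left, Nat.cast_le] using hmono

theorem count_exponent (σ : NormalForm K) : count σ (K + 2) = σ.1 := by
  have hzero : (factors σ).countP (K + 2 ≤ ·.1) = 0 :=
    List.countP_eq_zero.2 fun c _ => by simp
  rw [count, hzero, Nat.cast_zero, add_zero]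

theorem exponent_le_count (σ : NormalForm K) (v : ℕ) : σ.1 ≤ count σ v := by
  rw [count]
  omega

theorem count_none (e : ℤ) (v : ℕ) : count ((e, none) : NormalForm K) v = e := by
  simp [count, factors]

theorem count_some (e : ℤ) (b : Bool) (c : Fin (K + 2)) (l : List (Fin (K + 2))) (v : ℕ) :
    count (e, some (b, c, l)) v = e + l.countP (v ≤ ·.1) + if v ≤ c.1 then 1 else 0 := by
  simp [count, factors, List.countP_cons, add_assoc]

theorem count_genMul (a : Bool) (σ : NormalForm K) {v : ℕ} (hv : v ≤ K + 2) :
    count (genMul a σ) v = count σ v + if v = genIndex a σ then 1 else 0 := by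
  obtain ⟨e, _ | ⟨b, c, l⟩⟩ := σ
  · simp only [genMul, genIndex, count_none, count_some]
    grind
  obtain rfl | rfl := Bool.eq_or_eq_not b a
  · simp [genMul, genIndex, count, factors, List.countP_cons, add_assoc]
  · by_cases hc : c.1 + 1 < K + 2
    · simp only [genMul, genIndex, Bool.not_eq_self, if_false, hc, dif_pos, count_some]
      grind
    · have hcount : count (e + 1, ofFactors (!a) l) v = e + 1 + l.countP (v ≤ ·.1) := by
        simp [count]
      simp only [genMul, genIndex, Bool.not_eq_self, if_false, hc, dif_neg, not_false_eq_true,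
        count_some, hcount]
      grind

theorem sum_natAbs_add_natAbs {N N' : ℕ → ℤ} {m i : ℕ} (hi : i < m)
    (h : ∀ v < m, N' v = N v + if v = i then 1 else 0) :
    ∑ v ∈ Finset.range m, (N' v).natAbs + (N i).natAbs =
      ∑ v ∈ Finset.range m, (N v).natAbs + (N i + 1).natAbs := by
  have him : i ∈ Finset.range m := Finset.mem_range.2 hi
  have hrest : ∑ v ∈ (Finset.range m).erase i, (N' v).natAbs =
      ∑ v ∈ (Finset.range m).erase i, (N v).natAbs :=
    Finset.sum_congr rfl fun v hv => by
      obtain ⟨hvi, hvm⟩ := Finset.mem_erase.1 hv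
      rw [h v (Finset.mem_range.1 hvm), if_neg hvi, add_zero]
  rw [← Finset.add_sum_erase _ _ him, ← Finset.add_sum_erase _ (fun v => (N v).natAbs) him, hrest,
    h i hi, if_pos rfl]
  ring

theorem length_genMul (a : Bool) (σ : NormalForm K) :
    length (genMul a σ) + (count σ (genIndex a σ)).natAbs =
      length σ + (count σ (genIndex a σ) + 1).natAbs :=
  sum_natAbs_add_natAbs
    (Nat.lt_succ_of_le ((genIndex_le_genInvIndex a σ).trans (genInvIndex_le a σ)))
    fun _ hv => count_genMul a σ (Nat.le_of_lt_succ hv)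

theorem length_genInvMul (a : Bool) (σ : NormalForm K) :
    length (genInvMul a σ) + (count σ (genInvIndex a σ)).natAbs =
      length σ + (count σ (genInvIndex a σ) - 1).natAbs := by
  have hlen := length_genMul a (genInvMul a σ)
  have hcount := count_genMul a (genInvMul a σ) (genInvIndex_le a σ)
  rw [genMul_genInvMul, genIndex_genInvMul] at hlen hcount
  rw [if_pos rfl] at hcount
  rw [hcount, add_sub_cancel_right]
  exact hlen.symm

theorem length_letterVal_genPerm (x : Bool × Bool) (σ : NormalForm K) :
    length (letterVal genPerm x σ) = length σ + 1 ∨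
      length σ = length (letterVal genPerm x σ) + 1 := by
  obtain ⟨a, _ | _⟩ := x
  · have := length_genInvMul a σ
    rw [letterVal_genPerm_false]
    omega
  · have := length_genMul a σ
    rw [letterVal_genPerm_true]
    omega

theorem length_lt_letterInv_of_letterVal_lt (x : Bool × Bool) (σ : NormalForm K)
    (h : length (letterVal genPerm x σ) < length σ) :
    length σ < length (letterVal genPerm (letterInv x) σ) := by
  obtain ⟨a, b⟩ := x
  have hmul := length_genMul a σ
  have hinv := length_genInvMul a σ
  have hanti := count_anti σ (genIndex_le_genInvIndex a σ)
  cases b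
  · change length (genInvMul a σ) < _ at h
    change _ < length (genMul a σ)
    omega
  · change length (genMul a σ) < _ at h
    change _ < length (genInvMul a σ)
    omega

theorem length_lt_letterVal_genPerm {x : Bool × Bool} {σ : NormalForm K}
    (hpos : 0 ≤ count σ (genIndex x.1 σ)) (hneg : count σ (genInvIndex x.1 σ) ≤ 0) :
    length σ < length (letterVal genPerm x σ) := by
  obtain ⟨a, _ | _⟩ := x
  · have := length_genInvMul a σ
    change count σ (genInvIndex a σ) ≤ 0 at hneg
    rw [letterVal_genPerm_false]
    omega
  · have := length_genMul a σ
    change 0 ≤ count σ (genIndex a σ) at hpos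
    rw [letterVal_genPerm_true]
    omega

theorem eq_of_length_eq_zero {σ : NormalForm K} (h : length σ = 0) : σ = (0, none) := by
  have hcount : ∀ v < K + 3, count σ v = 0 := fun v hv =>
    Int.natAbs_eq_zero.1 (Finset.sum_eq_zero_iff.1 h v (Finset.mem_range.2 hv))
  have hexp : σ.1 = 0 := count_exponent σ ▸ hcount (K + 2) (by omega)
  obtain ⟨e, _ | ⟨b, c, l⟩⟩ := σ
  · exact Prod.ext hexp rfl
  · have h0 := hcount 0 (by omega)
    rw [count_some, if_pos (Nat.zero_le _)] at h0
    change e = 0 at hexp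
    omega

theorem exists_length_letterVal_genPerm_add_one {σ : NormalForm K} (h : length σ ≠ 0) :
    ∃ x, length (letterVal genPerm x σ) + 1 = length σ := by
  suffices ∃ a, length (genMul a σ) + 1 = length σ ∨ length (genInvMul a σ) + 1 = length σ by
    obtain ⟨a, ha | ha⟩ := this
    exacts [⟨(a, true), ha⟩, ⟨(a, false), ha⟩]
  obtain ⟨e, _ | ⟨b, c, l⟩⟩ := σ
  · have he : e ≠ 0 := by
      rintro rfl
      exact h (by simp [length, count_none])
    have hmul := length_genMul true ((e, none) : NormalForm K)
    have hinv := length_genInvMul true ((e, none) : NormalForm K)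
    rw [count_none] at hmul hinv
    exact ⟨true, by omega⟩
  · have hmul := length_genMul (!b) ((e, some (b, c, l)) : NormalForm K)
    have hinv := length_genInvMul b ((e, some (b, c, l)) : NormalForm K)
    have hlt : count (e, some (b, c, l)) (c.1 + 1) < count (e, some (b, c, l)) c.1 := by
      have hanti := count_anti ((e, ofFactors b l) : NormalForm K) (Nat.le_add_right c.1 1)
      simp only [count, factors_ofFactors] at hanti
      rw [count_some, count_some, if_pos le_rfl, if_neg (by omega)]
      omega
    simp only [genIndex, genInvIndex, if_true, Bool.eq_not_self, if_false] at hmul hinv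
    by_cases hc : 0 < count (e, some (b, c, l)) c.1
    · exact ⟨b, .inr (by omega)⟩
    · exact ⟨!b, .inl (by omega)⟩

theorem genPerm_pow_apply (a : Bool) (t : ℕ) (e : ℤ) (l : List (Fin (K + 2))) :
    (genPerm a ^ t) (e, ofFactors a l) = (e, ofFactors a (List.replicate t 0 ++ l)) := by
  induction t with
  | zero => rfl
  | succ t ih => rw [pow_succ', Equiv.Perm.mul_apply, ih, genPerm_apply, genMul_ofFactors]; rfl

theorem genPerm_inv_pow_apply (a : Bool) (t : ℕ) (e : ℤ) (l : List (Fin (K + 2))) :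
    ((genPerm a)⁻¹ ^ t) (e, ofFactors (!a) l) =
      (e - t, ofFactors (!a) (List.replicate t (Fin.last _) ++ l)) := by
  induction t with
  | zero => simp
  | succ t ih =>
    rw [pow_succ', Equiv.Perm.mul_apply, ih, genPerm_inv_apply, genInvMul_ofFactors,
      Nat.cast_succ, ← sub_sub]
    rfl

theorem genPerm_pow_apply_one (a : Bool) (t : ℕ) :
    (genPerm a ^ t) ((0, none) : NormalForm K) = (0, ofFactors a (List.replicate t 0)) := by
  simpa only [List.append_nil] using! genPerm_pow_apply a t 0 ([] : List (Fin (K + 2)))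

theorem genPerm_inv_pow_apply_one (a : Bool) (t : ℕ) :
    ((genPerm a)⁻¹ ^ t) ((0, none) : NormalForm K) =
      (-(t : ℤ), ofFactors (!a) (List.replicate t (Fin.last _))) := by
  simpa only [List.append_nil, zero_sub] using!
    genPerm_inv_pow_apply a t 0 ([] : List (Fin (K + 2)))

theorem length_lt_of_first_ne {x : Bool × Bool} {e : ℤ} {c : Fin (K + 2)}
    {l : List (Fin (K + 2))} (he : e ≤ 0) (hcount : 0 ≤ count (e, some (!x.1, c, l)) (c.1 + 1)) :
    length (e, some (!x.1, c, l)) < length (letterVal genPerm x (e, some (!x.1, c, l))) :=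
  length_lt_letterVal_genPerm (by simpa [genIndex] using hcount)
    (by simpa [genInvIndex, count_exponent] using he)

theorem length_lt_of_first_eq {x : Bool × Bool} {e : ℤ} {c : Fin (K + 2)}
    {l : List (Fin (K + 2))} (h0 : 0 ≤ count (e, some (x.1, c, l)) 0)
    (hcount : count (e, some (x.1, c, l)) c.1 ≤ 0) :
    length (e, some (x.1, c, l)) < length (letterVal genPerm x (e, some (x.1, c, l))) :=
  length_lt_letterVal_genPerm (by simpa [genIndex] using h0) (by simpa [genInvIndex] using hcount)

theorem length_lt_of_pow_pos_pow_pos (x : Bool × Bool) (t r : ℕ) {σ : NormalForm K}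
    (hσ : σ = (genPerm (!x.1) ^ (t + 1)) ((genPerm x.1 ^ r) (0, none))) :
    length σ < length (letterVal genPerm x σ) := by
  obtain ⟨c, l, rfl⟩ : ∃ c l, σ = (0, some (!x.1, c, l)) := by
    obtain ⟨c, l, hcl⟩ : ∃ c l, genPerm (!x.1) ((0, ofFactors x.1 (List.replicate r 0)) :
        NormalForm K) = (0, ofFactors (!x.1) (c :: l)) := by
      cases r
      · exact ⟨0, [], rfl⟩
      · exact ⟨1, _, by simp [genPerm_apply, genMul, ofFactors, List.replicate_succ]; rfl⟩
    rw [genPerm_pow_apply_one, pow_succ, Equiv.Perm.mul_apply, hcl, genPerm_pow_apply] at hσ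
    cases t <;> exact ⟨_, _, hσ⟩
  exact length_lt_of_first_ne le_rfl (exponent_le_count _ _)

theorem length_lt_of_pow_neg_pow_pos (x : Bool × Bool) (t r : ℕ) {σ : NormalForm K}
    (hσ : σ = ((genPerm (!x.1))⁻¹ ^ (t + 1)) ((genPerm x.1 ^ r) (0, none))) :
    length σ < length (letterVal genPerm x σ) := by
  have ht := genPerm_inv_pow_apply (!x.1) (t + 1) 0 (List.replicate r (0 : Fin (K + 2)))
  rw [Bool.not_not] at ht
  rw [genPerm_pow_apply_one, ht] at hσ
  obtain rfl := hσ
  refine length_lt_of_first_eq ?_ ?_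
  · simp [count_some, List.countP_replicate]
  · simp [count_some, List.countP_replicate]

theorem length_lt_of_pow_pos_pow_neg (x : Bool × Bool) (t r : ℕ) {σ : NormalForm K}
    (hσ : σ = (genPerm (!x.1) ^ (t + 1)) (((genPerm x.1)⁻¹ ^ r) (0, none))) :
    length σ < length (letterVal genPerm x σ) := by
  rw [genPerm_inv_pow_apply_one, genPerm_pow_apply] at hσ
  obtain rfl := hσ
  refine length_lt_of_first_ne (by simp) ?_
  simp [count_some, List.countP_replicate]

theorem length_lt_of_pow_neg_pow_neg (x : Bool × Bool) (t r : ℕ) {σ : NormalForm K}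
    (hσ : σ = ((genPerm (!x.1))⁻¹ ^ (t + 1)) (((genPerm x.1)⁻¹ ^ (r + 1)) (0, none))) :
    length σ < length (letterVal genPerm x σ) := by
  have hcancel : (genPerm (!x.1))⁻¹ ((-((r + 1 : ℕ) : ℤ), ofFactors (!x.1)
      (List.replicate (r + 1) (Fin.last _))) : NormalForm K) = (-((r + 1 : ℕ) : ℤ), ofFactors x.1
        (⟨K, by omega⟩ :: List.replicate r (Fin.last _))) := by
    rw [genPerm_inv_apply]
    simp [List.replicate_succ, ofFactors, genInvMul]
  have ht := genPerm_inv_pow_apply (!x.1) t (-((r + 1 : ℕ) : ℤ))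
    ((⟨K, by omega⟩ : Fin (K + 2)) :: List.replicate r (Fin.last _))
  rw [Bool.not_not] at ht
  rw [genPerm_inv_pow_apply_one, pow_succ, Equiv.Perm.mul_apply, hcancel, ht] at hσ
  have hcount : count σ 0 = 0 := by
    rw [hσ]
    simp only [count, factors_ofFactors, zero_le, decide_true, List.countP_true,
      List.length_append, List.length_cons, List.length_replicate]
    omega
  obtain ⟨e, c, l, rfl⟩ : ∃ e c l, σ = (e, some (x.1, c, l)) := by
    cases t <;> exact ⟨_, _, _, hσ⟩
  exact length_lt_of_first_eq hcount.ge (hcount ▸ count_anti _ (Nat.zero_le _))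

theorem length_lt_letterVal_genPerm_pow_mul_pow {x x' z : Bool × Bool} (hxz : x.1 ≠ z.1)
    (hxx' : x'.1 = x.1) {t : ℕ} (ht : 1 ≤ t) (r : ℕ) {σ : NormalForm K}
    (hσ : σ = (letterVal genPerm z ^ t) ((letterVal genPerm x' ^ r) (0, none))) :
    length σ < length (letterVal genPerm x σ) := by
  obtain ⟨t, rfl⟩ := Nat.exists_eq_add_of_le' ht
  obtain ⟨a', b'⟩ := x'
  obtain ⟨b, s⟩ := z
  obtain rfl : a' = x.1 := hxx'
  obtain rfl : b = !x.1 := (Bool.eq_not_of_ne hxz.symm)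
  cases s <;> cases b'
  · cases r
    · exact length_lt_of_pow_neg_pow_pos x t 0 hσ
    · exact length_lt_of_pow_neg_pow_neg x t _ hσ
  · exact length_lt_of_pow_neg_pow_pos x t r hσ
  · exact length_lt_of_pow_pos_pow_neg x t r hσ
  · exact length_lt_of_pow_pos_pow_pos x t r hσ

end NormalForm

/-! ### Two-generator Artin groups -/

section Garside

variable {H : Type*} [Group H] {y : Bool → H} {K : ℕ}

theorem semiconjBy_alt_gen (hy : ∀ a b, alt y a K = alt y b K) (a b : Bool) :
    SemiconjBy (alt y b K) (y a) (y (altLetter a K)) := by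
  have h := alt_succ' y (altLetter a K) K
  rw [alt_succ, altLetter_altLetter, altLetter_add_self, hy _ b, hy (altLetter a K) b] at h
  exact h.symm

theorem semiconjBy_alt (hy : ∀ a b, alt y a K = alt y b K) (a b : Bool) (j : ℕ) :
    SemiconjBy (alt y b K) (alt y a j) (alt y (altLetter a K) j) := by
  induction j generalizing a with
  | zero => exact SemiconjBy.one_right _
  | succ j ih =>
    rw [alt_succ, alt_succ, ← altLetter_not]
    exact (semiconjBy_alt_gen hy a b).mul_right (ih _)

end Garside

section AltWord

/-- The alternating positive word of length `j` beginning with `a`. -/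
def altWord (a : Bool) (j : ℕ) : List (Bool × Bool) :=
  (List.range j).map fun k => (altLetter a k, true)

theorem wordVal_altWord {H : Type*} [Group H] (y : Bool → H) (a : Bool) (j : ℕ) :
    wordVal y (altWord a j) = alt y a j := by
  induction j with
  | zero => rfl
  | succ j ih =>
    rw [altWord, List.range_succ, List.map_append, wordVal_append, ← altWord, ih, alt_succ']
    simp [letterVal]

end AltWord

namespace NormalForm

variable {H : Type*} [Group H] (y : Bool → H) {K : ℕ}

/-- The value at `y` of the product of alternating words whose lengths diminished by one are given
by a list, the first one beginning with `a`. -/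
def evalFactors : Bool → List (Fin (K + 2)) → H
  | _, [] => 1
  | a, c :: l => alt y a (c.1 + 1) * evalFactors (altLetter a c.1) l

/-- The value of a normal form at `y`. -/
def eval : NormalForm K → H
  | (e, none) => alt y true (K + 3) ^ e
  | (e, some (a, c, l)) => evalFactors y a (c :: l) * alt y true (K + 3) ^ e

theorem eval_ofFactors (e : ℤ) (a : Bool) (l : List (Fin (K + 2))) :
    eval y (e, ofFactors a l) = evalFactors y a l * alt y true (K + 3) ^ e := by
  cases l
  · exact (one_mul _).symm
  · rfl

variable {y}

theorem semiconjBy_evalFactors (hy : ∀ a b, alt y a (K + 3) = alt y b (K + 3)) (a : Bool)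
    (l : List (Fin (K + 2))) : SemiconjBy (alt y true (K + 3)) (evalFactors y a l)
      (evalFactors y (altLetter a (K + 3)) l) := by
  induction l generalizing a with
  | nil => exact SemiconjBy.one_right _
  | cons c l ih =>
    rw [evalFactors, evalFactors, altLetter_altLetter, add_comm (K + 3),
      ← altLetter_altLetter a _ (K + 3)]
    exact (semiconjBy_alt hy a true _).mul_right (ih _)

theorem eval_genMul (hy : ∀ a b, alt y a (K + 3) = alt y b (K + 3)) (a : Bool)
    (σ : NormalForm K) : eval y (genMul a σ) = y a * eval y σ := by
  obtain ⟨e, _ | ⟨b, c, l⟩⟩ := σ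
  · simp [genMul, eval, evalFactors]
  obtain rfl | rfl := Bool.eq_or_eq_not b a
  · simp [genMul, eval, evalFactors, mul_assoc]
  by_cases hc : c.1 + 1 < K + 2
  · simp [genMul, hc, eval, evalFactors, alt_succ y a, altLetter_not, altLetter_succ, mul_assoc]
  · obtain rfl : c = Fin.last _ := Fin.ext (by rw [Fin.val_last]; omega)
    have hsemi := semiconjBy_evalFactors hy (altLetter (!a) (K + 1)) l
    have ha : altLetter (altLetter (!a) (K + 1)) (K + 3) = !a := by
      rw [altLetter_altLetter, show K + 1 + (K + 3) = K + 2 + (K + 2) by omega, altLetter_add_self]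
    rw [ha] at hsemi
    have hgen : genMul a (e, some (!a, Fin.last (K + 1), l)) = (e + 1, ofFactors (!a) l) := by
      simp [genMul]
    rw [hgen, eval_ofFactors, eval, evalFactors, Fin.val_last, mul_assoc, ← mul_assoc (y a),
      ← alt_succ, hy a true, ← mul_assoc, hsemi.eq, mul_assoc, add_comm e, zpow_one_add]

theorem eval_wordVal_genPerm (hy : ∀ a b, alt y a (K + 3) = alt y b (K + 3))
    (w : List (Bool × Bool)) (σ : NormalForm K) :
    eval y (wordVal genPerm w σ) = wordVal y w * eval y σ := by
  induction w with
  | nil => simp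
  | cons x w ih =>
    rw [wordVal_cons, wordVal_cons, Equiv.Perm.mul_apply, mul_assoc, ← ih]
    obtain ⟨a, _ | _⟩ := x
    · have h := eval_genMul hy a (genInvMul a (wordVal genPerm w σ))
      rw [genMul_genInvMul] at h
      rw [letterVal_genPerm_false, h]
      exact (inv_mul_cancel_left _ _).symm
    · exact eval_genMul hy a _

/-- The two-generator Artin group with exponent `K + 3`, as a group of permutations of its normal
forms. -/
abbrev group (K : ℕ) : Subgroup (Equiv.Perm (NormalForm K)) := Subgroup.closure (Set.range genPerm)

/-- The generators of `NormalForm.group`. -/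
def groupGen (a : Bool) : group K := ⟨genPerm a, Subgroup.subset_closure ⟨a, rfl⟩⟩

/-- The word length on `NormalForm.group`. -/
def groupLength (h : group K) : ℕ := length (h.1 (0, none))

theorem coe_wordVal_groupGen (w : List (Bool × Bool)) :
    (wordVal groupGen w : group K).1 = wordVal genPerm w :=
  map_wordVal (group K).subtype groupGen w

theorem coe_letterVal_groupGen (x : Bool × Bool) :
    (letterVal groupGen x : group K).1 = letterVal genPerm x :=
  map_letterVal (group K).subtype groupGen x

theorem exists_wordVal_groupGen_eq (h : group K) : ∃ w, wordVal groupGen w = h := by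
  obtain ⟨h, hh⟩ := h
  rw [group, ← Set.image_univ, mem_closure_image_iff_exists_wordVal] at hh
  obtain ⟨w, -, rfl⟩ := hh
  exact ⟨w, Subtype.ext (coe_wordVal_groupGen w)⟩

theorem alt_groupGen (a b : Bool) :
    (alt groupGen a (K + 3) : group K) = alt groupGen b (K + 3) := by
  have hcoe : ∀ a : Bool, (alt groupGen a (K + 3) : group K).1 = alt genPerm a (K + 3) :=
    fun a => map_alt (group K).subtype groupGen a (K + 3)
  refine Subtype.ext (Equiv.ext fun σ => ?_)
  rw [hcoe, hcoe, alt_genPerm, alt_genPerm]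

theorem wordVal_eq_of_wordVal_genPerm_eq (hy : ∀ a b, alt y a (K + 3) = alt y b (K + 3))
    {u v : List (Bool × Bool)} (h : wordVal genPerm u ((0, none) : NormalForm K) =
      wordVal genPerm v (0, none)) : wordVal y u = wordVal y v := by
  have heval := congrArg (eval y) h
  rwa [eval_wordVal_genPerm hy, eval_wordVal_genPerm hy, mul_left_inj] at heval

theorem respects_groupGen_iff : Respects Set.univ (groupGen (K := K)) y ↔
    alt y true (K + 3) = alt y false (K + 3) := by
  refine ⟨fun h => ?_, fun h u v _ _ huv => wordVal_eq_of_wordVal_genPerm_eq (K := K) ?_ ?_⟩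
  · simpa only [wordVal_altWord] using h (u := altWord true (K + 3)) (v := altWord false (K + 3))
      (fun _ _ => Set.mem_univ _) (fun _ _ => Set.mem_univ _)
      (by rw [wordVal_altWord, wordVal_altWord, alt_groupGen])
  · intro a b
    cases a <;> cases b <;> simp only [h]
  · rw [← coe_wordVal_groupGen, huv, coe_wordVal_groupGen]

theorem isLargeDihedralLength_groupLength :
    IsLargeDihedralLength Set.univ (groupGen (K := K)) groupLength where
  map_one := by
    simp [groupLength, length, count_none]
  eq_one_of_eq_zero h hzero := by
    obtain ⟨w, rfl⟩ := exists_wordVal_groupGen_eq h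
    have hfix := eq_of_length_eq_zero hzero
    rw [coe_wordVal_groupGen] at hfix
    exact wordVal_eq_of_wordVal_genPerm_eq (v := []) alt_groupGen hfix
  step x h _ := by
    rw [groupLength, Subgroup.coe_mul, coe_letterVal_groupGen]
    exact length_letterVal_genPerm x _
  exists_descent h hne := by
    obtain ⟨x, hx⟩ := exists_length_letterVal_genPerm_add_one hne
    refine ⟨x, Set.mem_univ _, ?_⟩
    rw [groupLength, Subgroup.coe_mul, coe_letterVal_groupGen]
    exact hx
  lt_inv_mul_of_mul_lt x h _ hlt := by
    rw [groupLength, Subgroup.coe_mul, coe_letterVal_groupGen] at hlt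
    rw [← letterVal_letterInv, groupLength, groupLength, Subgroup.coe_mul, coe_letterVal_groupGen]
    exact length_lt_letterInv_of_letterVal_lt x _ hlt
  lt_mul_pow_mul_pow x x' z _ _ hxz hxx' t r ht := by
    refine (length_lt_letterVal_genPerm_pow_mul_pow hxz hxx' ht r ?_).trans_eq ?_
    · rw [← coe_letterVal_groupGen, ← coe_letterVal_groupGen]
      rfl
    · rw [← coe_letterVal_groupGen]
      rfl

end NormalForm

/-! ### Artin groups of large type as amalgams -/

section Relabelling

variable {I J D H : Type*} [Group D] [Group H] {S : Set I} {T : Set J} {f : J → D} {e : I → J}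
  {e' : J → I}

theorem wordVal_map (f : J → D) (e : I → J) (w : List (I × Bool)) :
    wordVal f (w.map (Prod.map e id)) = wordVal (f ∘ e) w :=
  congrArg List.prod List.map_map

theorem IsLargeDihedralLength.comp {L : D → ℕ} (h : IsLargeDihedralLength T f L)
    (he : Set.BijOn e S T) : IsLargeDihedralLength S (f ∘ e) L where
  map_one := h.map_one
  eq_one_of_eq_zero := h.eq_one_of_eq_zero
  step x g hx := h.step (e x.1, x.2) g (he.mapsTo hx)
  exists_descent g hg := by
    obtain ⟨⟨j, b⟩, hj, hlt⟩ := h.exists_descent g hg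
    obtain ⟨i, hi, rfl⟩ := he.surjOn hj
    exact ⟨(i, b), hi, hlt⟩
  lt_inv_mul_of_mul_lt x g hx := h.lt_inv_mul_of_mul_lt (e x.1, x.2) g (he.mapsTo hx)
  lt_mul_pow_mul_pow x x' z hx hz hxz hxx' :=
    h.lt_mul_pow_mul_pow (e x.1, x.2) (e x'.1, x'.2) (e z.1, z.2) (he.mapsTo hx) (he.mapsTo hz)
      (fun heq => hxz (he.injOn hx hz heq)) (congrArg e hxx')

theorem Respects.comp {y : J → H} (h : Respects T f y) (he : Set.MapsTo e S T) :
    Respects S (f ∘ e) (y ∘ e) := by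
  have hmem : ∀ {u : List (I × Bool)}, (∀ x ∈ u, x.1 ∈ S) →
      ∀ x ∈ u.map (Prod.map e id), x.1 ∈ T := fun hu x hx => by
    obtain ⟨z, hz, rfl⟩ := List.mem_map.1 hx
    exact he (hu z hz)
  intro u v hu hv huv
  rw [← wordVal_map, ← wordVal_map] at huv ⊢
  exact h (hmem hu) (hmem hv) huv

theorem Respects.congr {f' : J → D} {y y' : J → H} (h : Respects T f y) (hf : Set.EqOn f f' T)
    (hy : Set.EqOn y y' T) : Respects T f' y' := by
  intro u v hu hv huv
  rw [← wordVal_congr fun x hx => hf (hu x hx), ← wordVal_congr fun x hx => hf (hv x hx)] at huv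
  rw [← wordVal_congr fun x hx => hy (hu x hx), ← wordVal_congr fun x hx => hy (hv x hx)]
  exact h hu hv huv

theorem respects_comp_iff {y : I → H} (he : Set.MapsTo e S T) (he' : Set.MapsTo e' T S)
    (hinv : Set.InvOn e' e S T) : Respects S (f ∘ e) y ↔ Respects T f (y ∘ e') :=
  ⟨fun h => (h.comp he').congr (fun _ hj => congrArg f (hinv.2 hj)) fun _ _ => rfl,
    fun h => (h.comp he).congr (fun _ _ => rfl) fun _ hi => congrArg y (hinv.1 hi)⟩

theorem respects_freeGroup_of (y : I → H) : Respects Set.univ FreeGroup.of y := by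
  intro u v _ _ huv
  have hy : FreeGroup.lift y ∘ FreeGroup.of = y := funext fun _ => FreeGroup.lift_apply_of
  rw [← hy, ← map_wordVal, huv, map_wordVal]

end Relabelling

section BraidRelations

variable {I : Type*} {H : Type u} [Group H] {M : I → I → ℕ∞}

/-- The Artin relations prescribed by `M` between elements with indices in `S`. -/
def SatisfiesArtinRels (M : I → I → ℕ∞) (S : Set I) (y : I → H) : Prop :=
  ∀ i ∈ S, ∀ j ∈ S, i ≠ j → ∀ k : ℕ, M i j = k → altProd k (y i) (y j) = altProd k (y j) (y i)

theorem exists_isLargeDihedralLength_bool {m : ℕ∞} (hm : 3 ≤ m) :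
    ∃ (D : Type) (_ : Group D) (f : Bool → D) (L : D → ℕ), IsLargeDihedralLength Set.univ f L ∧
      ∀ {H : Type u} [Group H] (y : Bool → H),
        Respects Set.univ f y ↔ ∀ k : ℕ, m = k → alt y true k = alt y false k := by
  cases m with
  | top =>
    refine ⟨FreeGroup Bool, inferInstance, FreeGroup.of, FreeGroup.norm, isLargeDihedralLength_norm,
      fun y => iff_of_true (respects_freeGroup_of y) fun k hk => ?_⟩
    exact absurd hk.symm (ENat.natCast_ne_top k)
  | coe m =>
    obtain ⟨K, rfl⟩ := Nat.exists_eq_add_of_le' (Nat.ofNat_le_cast.1 hm)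
    refine ⟨_, _, _, _, NormalForm.isLargeDihedralLength_groupLength (K := K), fun y => ?_⟩
    rw [NormalForm.respects_groupGen_iff]
    exact ⟨fun h k hk => Nat.cast_injective hk ▸ h, fun h => h _ rfl⟩

theorem exists_isLargeDihedralLength_diag (i : I) :
    ∃ (D : Type) (_ : Group D) (f : I → D) (L : D → ℕ), IsLargeDihedralLength {i} f L ∧
      ∀ {H : Type u} [Group H] (y : I → H), Respects {i} f y ↔ SatisfiesArtinRels M {i} y := by
  have hmaps : Set.MapsTo (fun _ : I => ()) {i} Set.univ := Set.mapsTo_univ _ _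
  have hmaps' : Set.MapsTo (fun _ : Unit => i) Set.univ {i} := fun _ _ => rfl
  have hinv : Set.InvOn (fun _ : Unit => i) (fun _ => ()) {i} Set.univ :=
    ⟨fun _ h => h.symm, fun _ _ => rfl⟩
  refine ⟨FreeGroup Unit, inferInstance, FreeGroup.of ∘ fun _ => (), FreeGroup.norm,
    isLargeDihedralLength_norm.comp (hinv.bijOn hmaps hmaps'), fun y => ?_⟩
  rw [respects_comp_iff hmaps hmaps' hinv]
  refine iff_of_true (respects_freeGroup_of _) fun j hj k hk hjk => ?_
  exact absurd (hj.trans hk.symm) hjk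

theorem satisfiesArtinRels_pair_iff (hsymm : ∀ i j, M i j = M j i) {i j : I} (hij : i ≠ j)
    {y : I → H} : SatisfiesArtinRels M {i, j} y ↔
      ∀ k : ℕ, M i j = k → altProd k (y i) (y j) = altProd k (y j) (y i) := by
  refine ⟨fun h => h i (.inl rfl) j (.inr rfl) hij, ?_⟩
  rintro h a (rfl | rfl) b (rfl | rfl) hab k hk
  · exact absurd rfl hab
  · exact h k hk
  · exact (h k (hsymm b a ▸ hk)).symm
  · exact absurd rfl hab

theorem exists_isLargeDihedralLength_pair (hsymm : ∀ i j, M i j = M j i) {i j : I}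
    (hij : i ≠ j) (hm : 3 ≤ M i j) :
    ∃ (D : Type) (_ : Group D) (f : I → D) (L : D → ℕ), IsLargeDihedralLength {i, j} f L ∧
      ∀ {H : Type u} [Group H] (y : I → H),
        Respects {i, j} f y ↔ SatisfiesArtinRels M {i, j} y := by
  classical
  obtain ⟨D, _, f, L, hL, hf⟩ := exists_isLargeDihedralLength_bool.{u} hm
  let e : I → Bool := fun k => decide (k = i)
  let e' : Bool → I := fun b => bif b then i else j
  have hmaps : Set.MapsTo e {i, j} Set.univ := Set.mapsTo_univ _ _
  have hmaps' : Set.MapsTo e' Set.univ {i, j} := by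
    rintro (_ | _) -
    exacts [.inr rfl, .inl rfl]
  have hinv : Set.InvOn e' e {i, j} Set.univ := by
    refine ⟨?_, ?_⟩
    · rintro k (rfl | rfl)
      · simp [e, e']
      · simp [e, e', hij.symm]
    · rintro (_ | _) -
      · simp [e, e', hij.symm]
      · simp [e, e']
  refine ⟨D, _, f ∘ e, L, hL.comp (hinv.bijOn hmaps hmaps'), fun y => ?_⟩
  rw [respects_comp_iff hmaps hmaps' hinv, hf, satisfiesArtinRels_pair_iff hsymm hij]
  rfl

theorem exists_isLargeDihedralLength (hsymm : ∀ i j, M i j = M j i)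
    (hlarge : ∀ i j, i ≠ j → 3 ≤ M i j) (s : Sym2 I) :
    ∃ (D : Type) (_ : Group D) (f : I → D) (L : D → ℕ), IsLargeDihedralLength (s : Set I) f L ∧
      ∀ {H : Type u} [Group H] (y : I → H), Respects s f y ↔ SatisfiesArtinRels M s y := by
  induction s with
  | _ i j =>
    rw [Sym2.coe_mk]
    obtain rfl | hij := eq_or_ne i j
    · rw [Set.pair_eq_singleton]
      exact exists_isLargeDihedralLength_diag i
    · exact exists_isLargeDihedralLength_pair hsymm hij (hlarge i j hij)

end BraidRelations

section ArtinGroup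

variable {n : ℕ} {M : Fin n → Fin n → ℕ∞}

theorem satisfiesArtinRels_gen (S : Set (Fin n)) : SatisfiesArtinRels M S (gen n M) := by
  intro i _ j _ hij k hk
  have h := PresentedGroup.one_of_mem (rels := artinRels n M) ⟨i, j, hij, k, hk, rfl⟩
  rw [map_mul, map_inv, map_altProd, map_altProd, mul_inv_eq_one] at h
  exact h

theorem exists_wordVal_gen_eq (g : ArtinGroup n M) : ∃ w, wordVal (gen n M) w = g := by
  have hg : g ∈ Subgroup.closure (gen n M '' Set.univ) := by
    rw [Set.image_univ]
    exact (PresentedGroup.closure_range_of (artinRels n M)).symm ▸ Subgroup.mem_top g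
  obtain ⟨w, -, hw⟩ := mem_closure_image_iff_exists_wordVal.1 hg
  exact ⟨w, hw⟩

theorem exists_hom_comp_gen_eq {H : Type*} [Group H] {y : Fin n → H}
    (hy : ∀ s : Sym2 (Fin n), SatisfiesArtinRels M s y) :
    ∃ φ : ArtinGroup n M →* H, φ ∘ gen n M = y := by
  have hrels : ∀ r ∈ artinRels n M, FreeGroup.lift y r = 1 := by
    rintro r ⟨i, j, hij, k, hk, rfl⟩
    rw [map_mul, map_inv, map_altProd, map_altProd, FreeGroup.lift_apply_of,
      FreeGroup.lift_apply_of, mul_inv_eq_one]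
    exact hy s(i, j) i (Sym2.mem_mk_left i j) j (Sym2.mem_mk_right i j) hij k hk
  exact ⟨PresentedGroup.toGroup hrels, funext fun _ => PresentedGroup.toGroup.of hrels⟩

theorem exists_isAmalgam_gen (hsymm : ∀ i j, M i j = M j i)
    (hlarge : ∀ i j, i ≠ j → 3 ≤ M i j) :
    ∃ P : DihedralSystem.{0, 0} (Fin n), IsAmalgam P (gen n M) := by
  choose D hD f L hL hf using exists_isLargeDihedralLength.{0} hsymm hlarge
  exact ⟨⟨D, hD, f, L, hL⟩, fun s => (hf s _).2 (satisfiesArtinRels_gen _), exists_wordVal_gen_eq,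
    fun y hy => exists_hom_comp_gen_eq fun s => (hf s y).1 (hy s)⟩

end ArtinGroup

/-! ### Greatest divisors in Artin groups -/

section ArtinDivisors

variable {n : ℕ} {M : Fin n → Fin n → ℕ∞} {i j : Fin n} {g h h' : ArtinGroup n M}

theorem range_letterVal_gen (n : ℕ) (M : Fin n → Fin n → ℕ∞) :
    Set.range (letterVal (gen n M)) = genSet n M := by
  ext g
  simp only [Set.mem_range, Prod.exists, Bool.exists_bool, genSet, Set.mem_ofPred_eq, letterVal,
    Bool.false_eq_true, if_true, if_false, eq_comm (b := g), or_comm]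

theorem letterLength_gen (n : ℕ) (M : Fin n → Fin n → ℕ∞) :
    letterLength (gen n M) = ℓA n M := by
  rw [letterLength, range_letterVal_gen, ℓA]

theorem closure_image_gen (n : ℕ) (M : Fin n → Fin n → ℕ∞) (i j : Fin n) :
    Subgroup.closure (gen n M '' s(i, j)) = Gij n M i j := by
  rw [Sym2.coe_mk, Set.image_pair, Gij]

theorem letterVal_gen_mem_lettersIJ {a : Letter n} (ha : a.1 ∈ s(i, j)) :
    letterVal (gen n M) a ∈ lettersIJ n M i j := by
  obtain ⟨k, b⟩ := a
  obtain rfl | rfl := Sym2.mem_iff.1 ha <;> cases b <;> simp [letterVal, lettersIJ]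

theorem IsGreatestLeftDiv.isMaxLD_iff (hh : IsGreatestLeftDiv (ℓA n M) (Gij n M i j) h g) :
    IsMaxLD n M i j g h' ↔ h' = h := by
  constructor
  · rintro ⟨hmem, hdiv, hmax⟩
    have hle := hmax h hh.1 hh.2.1
    rw [← letterLength_gen] at hh hdiv hle
    exact hh.eq_of_letterLength_le exists_wordVal_gen_eq hmem hdiv hle
  · rintro rfl
    exact ⟨hh.1, hh.2.1, fun k hk hdiv => (Nat.le_add_right _ _).trans_eq (hh.2.2 k hk hdiv)⟩

theorem ℓA_inv (g : ArtinGroup n M) : ℓA n M g⁻¹ = ℓA n M g := by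
  rw [← letterLength_gen, letterLength_inv exists_wordVal_gen_eq]

theorem isRightDiv_inv_iff : IsRightDiv (ℓA n M) h⁻¹ g⁻¹ ↔ IsLeftDiv (ℓA n M) h g := by
  rw [IsRightDiv, IsLeftDiv, ℓA_inv, ℓA_inv, ← mul_inv_rev, ℓA_inv, add_comm]

theorem isMaxRD_inv_iff : IsMaxRD n M i j g⁻¹ h⁻¹ ↔ IsMaxLD n M i j g h := by
  rw [IsMaxRD, inv_surjective.forall]
  simp only [IsMaxLD, inv_mem_iff, isRightDiv_inv_iff, ℓA_inv]

theorem fst_mem_of_mem_ijPrefix {w : List (Letter n)} {a : Letter n} (ha : a ∈ ijPrefix n i j w) :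
    a.1 ∈ s(i, j) := by
  simpa only [Bool.or_eq_true, beq_iff_eq, Sym2.mem_iff] using List.mem_takeWhile_imp ha

theorem exists_ijPrefix_append_eq (i j : Fin n) (w : List (Letter n)) :
    ∃ v, ijPrefix n i j w ++ v = w ∧ ∀ a ∈ v.head?, a.1 ∉ s(i, j) := by
  refine ⟨_, List.takeWhile_append_dropWhile, fun a ha => ?_⟩
  have hnot := List.head?_dropWhile_not (fun l : Letter n => l.1 == i || l.1 == j) w
  rw [Option.mem_def.1 ha] at hnot
  simpa only [Bool.or_eq_false_iff, beq_eq_false_iff_ne, Sym2.mem_iff, not_or] using hnot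

theorem exists_isGreatestLeftDiv_Gij (hsymm : ∀ i j, M i j = M j i)
    (hlarge : ∀ i j, i ≠ j → 3 ≤ M i j) (i j : Fin n) (g : ArtinGroup n M) :
    ∃ h, IsGreatestLeftDiv (ℓA n M) (Gij n M i j) h g := by
  obtain ⟨P, hP⟩ := exists_isAmalgam_gen hsymm hlarge
  simpa only [letterLength_gen, closure_image_gen] using hP.exists_isGreatestLeftDiv s(i, j) g

theorem exists_isGreatestLeftDiv_eq_ijPrefix_mul_pow (hsymm : ∀ i j, M i j = M j i)
    (hlarge : ∀ i j, i ≠ j → 3 ≤ M i j) (i j : Fin n) {w : List (Letter n)}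
    (hw : IsGeodesic n M w) : ∃ a ∈ lettersIJ n M i j, ∃ r : ℕ,
      IsGreatestLeftDiv (ℓA n M) (Gij n M i j) (wordElt n M (ijPrefix n i j w) * a ^ r)
        (wordElt n M w) ∧
      ℓA n M (wordElt n M (ijPrefix n i j w) * a ^ r) =
        ℓA n M (wordElt n M (ijPrefix n i j w)) + r := by
  obtain ⟨P, hP⟩ := exists_isAmalgam_gen hsymm hlarge
  obtain ⟨v, hv, hhead⟩ := exists_ijPrefix_append_eq i j w
  have hlen : letterLength (gen n M) (wordVal (gen n M) (ijPrefix n i j w ++ v)) =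
      (ijPrefix n i j w ++ v).length := by
    rw [hv, letterLength_gen]
    exact hw
  obtain ⟨a, ha, r, hdiv, hr⟩ :=
    hP.exists_isGreatestLeftDiv_eq_mul_pow hlen (fun _ => fst_mem_of_mem_ijPrefix) hhead
  rw [letterLength_gen] at hdiv hr
  rw [closure_image_gen, hv] at hdiv
  exact ⟨_, letterVal_gen_mem_lettersIJ ha, r, hdiv, hr⟩

end ArtinDivisors

/-- **Proposition.** In an Artin group of large type, every element `g` has a unique
left divisor of maximal length in `G(i,j)`, and a unique right divisor of maximal
length in `G(i,j)`; moreover the maximal left divisor is obtained from the maximal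
`{x_i,x_j}`-prefix of any geodesic representative of `g` by appending a power of a
single letter. -/
theorem maximal_two_generator_divisors
    (n : ℕ) (hn : 2 ≤ n) (M : Fin n → Fin n → ℕ∞)
    (hsymm : ∀ i j, M i j = M j i)
    (hdiag : ∀ i, M i i = 1)
    (hlarge : ∀ i j, i ≠ j → 3 ≤ M i j)
    (g : ArtinGroup n M) (i j : Fin n) (hij : i ≠ j) :
    (∃! h : ArtinGroup n M, IsMaxLD n M i j g h) ∧
    (∃! h : ArtinGroup n M, IsMaxRD n M i j g h) ∧
    (∀ h : ArtinGroup n M, IsMaxLD n M i j g h →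
      ∀ w : List (Letter n), IsGeodesic n M w → wordElt n M w = g →
        ∃ a ∈ lettersIJ n M i j, ∃ r : ℕ,
          h = wordElt n M (ijPrefix n i j w) * a ^ r ∧
          ℓA n M h = ℓA n M (wordElt n M (ijPrefix n i j w)) + r) := by
  refine ⟨?_, ?_, ?_⟩
  · obtain ⟨h, hh⟩ := exists_isGreatestLeftDiv_Gij hsymm hlarge i j g
    exact ⟨h, hh.isMaxLD_iff.2 rfl, fun _ => hh.isMaxLD_iff.1⟩
  · obtain ⟨h, hh⟩ := exists_isGreatestLeftDiv_Gij hsymm hlarge i j g⁻¹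
    have hiff (k : ArtinGroup n M) : IsMaxRD n M i j g k ↔ k = h⁻¹ := by
      rw [← inv_inv g, ← inv_inv k, isMaxRD_inv_iff, hh.isMaxLD_iff, inv_inj]
    exact ⟨h⁻¹, (hiff _).2 rfl, fun k => (hiff k).1⟩
  · rintro h hh w hw rfl
    obtain ⟨a, ha, r, hdiv, hr⟩ := exists_isGreatestLeftDiv_eq_ijPrefix_mul_pow hsymm hlarge i j hw
    obtain rfl := hdiv.isMaxLD_iff.1 hh
    exact ⟨a, ha, r, rfl, hr⟩

end ArtinRD
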